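/- arXiv:1012.1838 — 2 statements merged into one kernel-verified Lean document; each statement's English description precedes it below -/
import Mathlib

section
/- Let K be a field with at least 13 elements and S a smooth cubic surface in P^3 over K. Let ℓ be a K-line contained in S and let P ∈ ℓ(K) be a point that is not an Eckardt point. Then ℓ(K) ⊆ Γ_P(K) ⊆ Span({P}). -/
/- Common framework: points, lines, intersection divisors, the secant-tangent span,
the groups `H_S(K)`, geometric notions over the algebraic closure, and topologies. -/

open MvPolynomial

noncomputable section

namespace CubicSurf

variable {K L : Type*} [Field K] [Field L] {n : ℕ}

/-- The set of `K`-rational points of the projective hypersurface `F = 0`. -/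
def zeroSet (F : MvPolynomial (Fin n) K) : Set (Projectivization K (Fin n → K)) :=
  {P | eval P.rep F = 0}

/-- The binary form obtained by restricting `F` to the line spanned by `u` and `v`,
via the parametrization `(s : t) ↦ s • u + t • v`. -/
def lineRestrict (F : MvPolynomial (Fin n) K) (u v : Fin n → K) : MvPolynomial (Fin 2) K :=
  aeval (fun i => C (u i) * X 0 + C (v i) * X 1) F

/-- A projective line: a 2-dimensional linear subspace of `K^n`. -/
def IsLine (W : Submodule K (Fin n → K)) : Prop := Module.finrank K W = 2

/-- The line `W` lies (geometrically) on the hypersurface `F = 0`. -/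
def LineOnSurf (F : MvPolynomial (Fin n) K) (W : Submodule K (Fin n → K)) : Prop :=
  ∀ u v : Fin n → K, u ∈ W → v ∈ W → lineRestrict F u v = 0

/-- The projective point `P` lies on the line `W`. -/
def OnLine (W : Submodule K (Fin n → K)) (P : Projectivization K (Fin n → K)) : Prop :=
  P.rep ∈ W

/-- The set of `K`-points of the line `W`. -/
def linePts (W : Submodule K (Fin n → K)) : Set (Projectivization K (Fin n → K)) :=
  {P | OnLine W P}

/-- `ℓ · S = P + Q + R`: the intersection divisor (with multiplicities) of the line `W`
with the hypersurface `F = 0` is `P + Q + R`. -/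
def MeetsIn (F : MvPolynomial (Fin n) K) (W : Submodule K (Fin n → K))
    (P Q R : Projectivization K (Fin n → K)) : Prop :=
  ∃ (u v : Fin n → K) (_ : u ∈ W) (_ : v ∈ W) (_ : LinearIndependent K ![u, v])
    (c : K) (l m : Fin 3 → K) (h : ∀ k, l k • u + m k • v ≠ 0),
      c ≠ 0 ∧
      lineRestrict F u v = C c * ∏ k : Fin 3, (C (m k) * X 0 - C (l k) * X 1) ∧
      Projectivization.mk K _ (h 0) = P ∧
      Projectivization.mk K _ (h 1) = Q ∧
      Projectivization.mk K _ (h 2) = R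

/-- Membership in the span of a set of points under the secant/tangent process:
the smallest subset of `S(K)` containing `B` such that whenever `P`, `Q` are in it and a
`K`-line `ℓ ⊄ S` satisfies `ℓ·S = P+Q+R` with `R ∈ S(K)`, then `R` is in it. -/
inductive SpanMem (F : MvPolynomial (Fin n) K) (B : Set (Projectivization K (Fin n → K))) :
    Projectivization K (Fin n → K) → Prop
  | base (P : Projectivization K (Fin n → K)) (hP : P ∈ B) : SpanMem F B P
  | secant (P Q R : Projectivization K (Fin n → K)) (W : Submodule K (Fin n → K))
      (hW : IsLine W) (hWS : ¬ LineOnSurf F W) (hP : SpanMem F B P) (hQ : SpanMem F B Q)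
      (hR : R ∈ zeroSet F) (hm : MeetsIn F W P Q R) : SpanMem F B R

/-- The span of a set of points under the secant/tangent process. -/
def Span (F : MvPolynomial (Fin n) K) (B : Set (Projectivization K (Fin n → K))) :
    Set (Projectivization K (Fin n → K)) :=
  {P | SpanMem F B P}

/-- Smoothness of the projective hypersurface `F = 0`: over the algebraic closure there is
no nonzero common zero of `F` and all of its partial derivatives. -/
def IsSmoothHypersurf (F : MvPolynomial (Fin n) K) : Prop :=
  ∀ v : Fin n → AlgebraicClosure K,
    eval v (MvPolynomial.map (algebraMap K (AlgebraicClosure K)) F) = 0 →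
    (∀ i, eval v (pderiv i (MvPolynomial.map (algebraMap K (AlgebraicClosure K)) F)) = 0) →
    v = 0

/-- A smooth cubic hypersurface. -/
def SmoothCubic (F : MvPolynomial (Fin n) K) : Prop :=
  F.IsHomogeneous 3 ∧ IsSmoothHypersurf F

/-- The linear form cutting out the tangent plane `Π_P` of `F = 0` at `P`,
evaluated at the representative of a point `Q`; `Q ∈ Π_P` iff this vanishes. -/
def tangentEval (F : MvPolynomial (Fin n) K) (P Q : Projectivization K (Fin n → K)) : K :=
  ∑ i, eval P.rep (pderiv i F) * Q.rep i

/-- The set of `K`-points of the tangent plane `Π_P`. -/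
def tangentPlanePts (F : MvPolynomial (Fin n) K) (P : Projectivization K (Fin n → K)) :
    Set (Projectivization K (Fin n → K)) :=
  {Q | tangentEval F P Q = 0}

/-- The set of `K`-points of `Γ_P = S ∩ Π_P`. -/
def GammaPts (F : MvPolynomial (Fin n) K) (P : Projectivization K (Fin n → K)) :
    Set (Projectivization K (Fin n → K)) :=
  zeroSet F ∩ tangentPlanePts F P

/-! ### Base change along a field embedding -/

/-- Base change of a vector along a field embedding. -/
def clVec (φ : K →+* L) (v : Fin n → K) : Fin n → L := fun i => φ (v i)

lemma clVec_ne_zero (φ : K →+* L) {v : Fin n → K} (hv : v ≠ 0) : clVec φ v ≠ 0 := by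
  intro h
  apply hv
  funext i
  have := congrFun h i
  simpa [clVec] using φ.injective (by simpa [clVec] using this)

/-- Base change of a projective point along a field embedding. -/
def clPt (φ : K →+* L) (P : Projectivization K (Fin n → K)) :
    Projectivization L (Fin n → L) :=
  Projectivization.mk L (clVec φ P.rep) (clVec_ne_zero φ P.rep_nonzero)

lemma eval_smul_of_isHomogeneous {R : Type*} [CommSemiring R] {F : MvPolynomial (Fin n) R}
    {d : ℕ} (hF : F.IsHomogeneous d) (a : R) (w : Fin n → R) :
    eval (a • w) F = a ^ d * eval w F := by
  classical
  rw [eval_eq', eval_eq', Finset.mul_sum]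
  refine Finset.sum_congr rfl fun s hs => ?_
  have hdeg : ∑ i, s i = d := by
    have h1 := hF (MvPolynomial.mem_support_iff.mp hs)
    rw [Finsupp.weight_apply] at h1
    rw [← h1, Finsupp.sum_fintype]
    · simp
    · intro i; simp
  have key : ∀ i : Fin n, (a • w) i ^ s i = a ^ s i * w i ^ s i := by
    intro i; simp [mul_pow]
  rw [Finset.prod_congr rfl (fun i _ => key i), Finset.prod_mul_distrib,
    Finset.prod_pow_eq_pow_sum, hdeg]
  ring

lemma clVec_eval (φ : K →+* L) (F : MvPolynomial (Fin n) K) (v : Fin n → K) :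
    eval (clVec φ v) (MvPolynomial.map φ F) = φ (eval v F) := by
  rw [eval_map]
  have h : φ (eval v F) = φ (eval₂Hom (RingHom.id K) v F) := rfl
  rw [h, map_eval₂Hom]
  rfl

/-- A point given by a vector on which a homogeneous `F` vanishes lies in the zero set. -/
lemma mk_mem_zeroSet {F : MvPolynomial (Fin n) K} {d : ℕ} (hF : F.IsHomogeneous d)
    {v : Fin n → K} (hv : v ≠ 0) (h : eval v F = 0) :
    Projectivization.mk K v hv ∈ zeroSet F := by
  obtain ⟨a, ha⟩ := Projectivization.exists_smul_eq_mk_rep K v hv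
  show eval (Projectivization.mk K v hv).rep F = 0
  have hrep : (Projectivization.mk K v hv).rep = (a : K) • v := by
    rw [← ha, Units.smul_def]
  rw [hrep, eval_smul_of_isHomogeneous hF, h, mul_zero]

lemma clPt_mem_zeroSet (φ : K →+* L) {F : MvPolynomial (Fin n) K} {d : ℕ}
    (hF : F.IsHomogeneous d) {P : Projectivization K (Fin n → K)} (hP : P ∈ zeroSet F) :
    clPt φ P ∈ zeroSet (MvPolynomial.map φ F) := by
  apply mk_mem_zeroSet (hF.map φ)
  rw [clVec_eval, hP, map_zero]

/-- The induced map on points of `S` under base change of the field. -/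
def ptMap (φ : K →+* L) {F : MvPolynomial (Fin n) K} {d : ℕ} (hF : F.IsHomogeneous d)
    (P : zeroSet F) : zeroSet (MvPolynomial.map φ F) :=
  ⟨clPt φ P.1, clPt_mem_zeroSet φ hF P.2⟩

/-- A subspace of `L^n` is defined over `K` (w.r.t. `φ : K →+* L`) if it is spanned by
the base change of a `K`-subspace. -/
def DefinedOver (φ : K →+* L) (W : Submodule L (Fin n → L)) : Prop :=
  ∃ W₀ : Submodule K (Fin n → K), W = Submodule.span L (clVec φ '' (W₀ : Set (Fin n → K)))

/-! ### Asymptotic lines, parabolic points, Eckardt points -/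

/-- The line `W` is asymptotic to `F = 0` at `P`: the intersection multiplicity
`(ℓ · S)_P` is at least 3. -/
def AsymptoticAt (F : MvPolynomial (Fin n) K) (W : Submodule K (Fin n → K))
    (P : Projectivization K (Fin n → K)) : Prop :=
  IsLine W ∧ P.rep ∈ W ∧
    ∃ v ∈ W, LinearIndependent K ![P.rep, v] ∧
      ∃ c : K, lineRestrict F P.rep v = C c * (X 1) ^ 3

/-- The set of asymptotic lines at `P`. -/
def AsymSet (F : MvPolynomial (Fin n) K) (P : Projectivization K (Fin n → K)) :
    Set (Submodule K (Fin n → K)) :=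
  {W | AsymptoticAt F W P}

/-- A point of a hypersurface is parabolic (relative to the given field) if it does
not have exactly two distinct asymptotic lines (i.e. it has one or infinitely many). -/
def ParabolicAt (F : MvPolynomial (Fin n) K) (P : Projectivization K (Fin n → K)) : Prop :=
  ¬ ∃ W₁ W₂ : Submodule K (Fin n → K), W₁ ≠ W₂ ∧ AsymSet F P = {W₁, W₂}

/-- An Eckardt point (relative to the given field): three distinct lines lying on the
surface pass through `P`. -/
def EckardtAt (F : MvPolynomial (Fin n) K) (P : Projectivization K (Fin n → K)) : Prop :=
  ∃ W₁ W₂ W₃ : Submodule K (Fin n → K), W₁ ≠ W₂ ∧ W₁ ≠ W₃ ∧ W₂ ≠ W₃ ∧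
    (∀ W ∈ ({W₁, W₂, W₃} : Set (Submodule K (Fin n → K))),
      IsLine W ∧ LineOnSurf F W ∧ OnLine W P)

section geometric

variable (F : MvPolynomial (Fin n) K)

/-- `F` base changed to the algebraic closure of `K`. -/
def clF : MvPolynomial (Fin n) (AlgebraicClosure K) :=
  MvPolynomial.map (algebraMap K (AlgebraicClosure K)) F

/-- A `K`-point of `S` is parabolic (a geometric notion, checked over `K̄`). -/
def IsParabolic (P : Projectivization K (Fin n → K)) : Prop :=
  ParabolicAt (clF F) (clPt (algebraMap K (AlgebraicClosure K)) P)

/-- A `K`-point of `S` is an Eckardt point (a geometric notion, checked over `K̄`). -/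
def IsEckardt (P : Projectivization K (Fin n → K)) : Prop :=
  EckardtAt (clF F) (clPt (algebraMap K (AlgebraicClosure K)) P)

/-- A `K`-point of `S` is `K`-hyperbolic: it has exactly two asymptotic lines over `K̄`,
and both are defined over `K`. -/
def IsHyperbolic (P : Projectivization K (Fin n → K)) : Prop :=
  ∃ W₁ W₂, W₁ ≠ W₂ ∧
    AsymSet (clF F) (clPt (algebraMap K (AlgebraicClosure K)) P) = {W₁, W₂} ∧
    DefinedOver (algebraMap K (AlgebraicClosure K)) W₁ ∧
    DefinedOver (algebraMap K (AlgebraicClosure K)) W₂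

/-- A `K`-point of `S` is `K`-ternary: at least one of the asymptotic lines of `S`
through `P` is defined over `K`. -/
def IsTernary (P : Projectivization K (Fin n → K)) : Prop :=
  ∃ W ∈ AsymSet (clF F) (clPt (algebraMap K (AlgebraicClosure K)) P),
    DefinedOver (algebraMap K (AlgebraicClosure K)) W

end geometric

/-! ### The group `H_S(K)` -/

variable (F : MvPolynomial (Fin n) K)

/-- `G_S(K)`: the free abelian group on the set `S(K)`. -/
abbrev GS := FreeAbelianGroup (zeroSet F)

/-- The degree homomorphism `G_S(K) → ℤ`, `Σ aᵢ Pᵢ ↦ Σ aᵢ`. -/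
def degHom : GS F →+ ℤ := FreeAbelianGroup.lift fun _ => (1 : ℤ)

/-- `P + Q + R` is a "three point sum": either cut out on `S` with multiplicity by a
`K`-line not contained in `S`, or `P`, `Q`, `R` all lie on a `K`-line contained in `S`. -/
def TripleRel (P Q R : zeroSet F) : Prop :=
  ∃ W : Submodule K (Fin n → K), IsLine W ∧
    ((¬ LineOnSurf F W ∧ MeetsIn F W P.1 Q.1 R.1) ∨
      (LineOnSurf F W ∧ OnLine W P.1 ∧ OnLine W Q.1 ∧ OnLine W R.1))

/-- `G'_S(K)`: the subgroup generated by all three point sums. -/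
def Gp : AddSubgroup (GS F) :=
  AddSubgroup.closure {x | ∃ P Q R : zeroSet F, TripleRel F P Q R ∧
    x = FreeAbelianGroup.of P + FreeAbelianGroup.of Q + FreeAbelianGroup.of R}

/-- `G''_S(K)`: the degree-0 part of `G'_S(K)`. -/
def Gpp : AddSubgroup (GS F) := Gp F ⊓ (degHom F).ker

/-- `H_S(K) = G_S(K)/G''_S(K)`. -/
abbrev HS := GS F ⧸ Gpp F

/-- The class `[P] ∈ H_S(K)` of a point `P ∈ S(K)`. -/
def HClass (P : zeroSet F) : HS F := QuotientAddGroup.mk' (Gpp F) (FreeAbelianGroup.of P)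

/-- The degree homomorphism `H_S(K) → ℤ`. -/
def HdegHom : HS F →+ ℤ :=
  QuotientAddGroup.lift (Gpp F) (degHom F) (fun _ hx => hx.2)

/-- `H⁰_S(K)`: the degree-0 part of `H_S(K)`. -/
def H0 : AddSubgroup (HS F) := (HdegHom F).ker

@[simp] lemma HdegHom_HClass (P : zeroSet F) : HdegHom F (HClass F P) = 1 := by
  simp [HdegHom, HClass, degHom]

/-- The class `[P] - [Q]`, as an element of `H⁰_S(K)`. -/
def H0diff (P Q : zeroSet F) : H0 F :=
  ⟨HClass F P - HClass F Q, by simp [H0, AddMonoidHom.mem_ker, map_sub]⟩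

/-! ### mod-`p` dimensions and torsion -/

/-- `A/pA` for an abelian group `A`. -/
abbrev ModP (p : ℕ) (A : Type*) [AddCommGroup A] : Type _ :=
  A ⧸ (AddMonoidHom.range (nsmulAddMonoidHom p : A →+ A))

instance ModP.instModule (p : ℕ) (A : Type*) [AddCommGroup A] : Module (ZMod p) (ModP p A) :=
  QuotientAddGroup.zmodModule (fun x => ⟨x, rfl⟩)

/-- `dim_{F_p} A/pA`. -/
def dimModP (p : ℕ) (A : Type*) [AddCommGroup A] : Cardinal := Module.rank (ZMod p) (ModP p A)

/-- The `k`-torsion subgroup `A[k]` of an abelian group `A`. -/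
def torsion (k : ℕ) (A : Type*) [AddCommGroup A] : AddSubgroup A :=
  (nsmulAddMonoidHom k : A →+ A).ker

instance torsion.instModule (k : ℕ) (A : Type*) [AddCommGroup A] :
    Module (ZMod k) (torsion k A) :=
  AddCommGroup.zmodModule (fun x => Subtype.ext x.2)

/-- `dim_{F_k} A[k]`: the dimension of the `k`-torsion subgroup (for `k` prime). -/
def dimTorsion (k : ℕ) (A : Type*) [AddCommGroup A] : Cardinal :=
  Module.rank (ZMod k) (torsion k A)

/-! ### Topologies -/

/-- The quotient topology on projective space induced by the topology of `K`. -/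
def projTop (K : Type*) [Field K] [TopologicalSpace K] (n : ℕ) :
    TopologicalSpace (Projectivization K (Fin n → K)) :=
  TopologicalSpace.coinduced
    (fun v : {v : Fin n → K // v ≠ 0} => Projectivization.mk K v.1 v.2) inferInstance

/-- The induced topology on the set of `K`-points of `S`. -/
def surfTop (F : MvPolynomial (Fin n) K) [TopologicalSpace K] :
    TopologicalSpace (zeroSet F) :=
  TopologicalSpace.induced Subtype.val (projTop K n)

/-- `K` (a topological field) is a local field: it is isomorphic, as a topological field,
to `ℝ`, to `ℂ`, or to a finite extension of `ℚ_p` for some prime `p` (with its canonical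
topology, namely the `ℚ_p`-vector space topology). -/
def IsLocalField (K : Type*) [Field K] [TopologicalSpace K] : Prop :=
  (∃ e : K ≃+* ℝ, IsHomeomorph e) ∨ (∃ e : K ≃+* ℂ, IsHomeomorph e) ∨
    (∃ (p : ℕ), p.Prime ∧ ∃ (_ : Fact p.Prime) (f : ℚ_[p] →+* K) (m : ℕ)
      (e : K ≃+ (Fin m → ℚ_[p])),
      (∀ (c : ℚ_[p]) (x : K), e (f c * x) = c • e x) ∧ IsHomeomorph e)

end CubicSurf

/-!
The tangent plane at `P` meets `S` in `ℓ` and a residual conic. If `P` is in the span, then so is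
every point of the conic off `ℓ`, by the line through that point and `P`, tangent at `P`; secants
between these points then reach the points of `ℓ` at which the tangent plane is a different one.
When the conic is smooth, only points of `ℓ` on the conic remain. To reach such a point `R`, replace
`P` by a suitable point `P + t R`: the discriminant of the residual conic in the tangent plane at
that point is a nonzero polynomial in `t` of degree at most `10`, so it has a nonroot `t ≠ 0` as
soon as `K` has more than `11` elements.

When the conic is singular, smoothness of `S` and the hypothesis that `P` is not an Eckardt point
force `Γ_P` to be a triangle with `P` as one vertex, and all of its lines are defined over `K`.
Tangents at a vertex reach every point of the opposite side other than its ends; starting at `P`,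
the pencil of tangent planes along that side then gives the other two vertices, and with them the
other sides.
-/

namespace CubicSurf

/-! ### Polarization of a cubic form -/

section Polarization

variable {R S : Type*} [CommRing R] [CommRing S] {n : ℕ} {F : MvPolynomial (Fin n) R}

/-- The differential of `F` at `u`, as a linear form; at a point of the hypersurface `F = 0`
its kernel is the tangent hyperplane. -/
def differential (F : MvPolynomial (Fin n) R) (u : Fin n → R) : (Fin n → R) →ₗ[R] R :=
  ∑ i, eval u (pderiv i F) • LinearMap.proj i

/-- The polarization of a cubic form `F`: the symmetric trilinear form `T` with
`T u u w = 2 * differential F u w`, defined without dividing by `2` so that it is meaningful in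
every characteristic. -/
def polarization (F : MvPolynomial (Fin n) R) (u v w : Fin n → R) : R :=
  differential F (u + v) w - differential F u w - differential F v w

lemma differential_apply (F : MvPolynomial (Fin n) R) (u v : Fin n → R) :
    differential F u v = ∑ i, eval u (pderiv i F) * v i := by
  simp [differential]

lemma differential_add_poly (F G : MvPolynomial (Fin n) R) (u : Fin n → R) :
    differential (F + G) u = differential F u + differential G u := by
  simp [differential, add_smul, Finset.sum_add_distrib]

lemma differential_mul (F G : MvPolynomial (Fin n) R) (u v : Fin n → R) :
    differential (F * G) u v = eval u F * differential G u v + eval u G * differential F u v := by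
  simp only [differential_apply, pderiv_mul, map_add, map_mul, add_mul, Finset.sum_add_distrib,
    Finset.mul_sum]
  rw [add_comm]
  congr 1 <;> exact Finset.sum_congr rfl fun i _ => by ring

lemma differential_map (φ : R →+* S) (F : MvPolynomial (Fin n) R) (u v : Fin n → R) :
    differential (map φ F) (φ ∘ u) (φ ∘ v) = φ (differential F u v) := by
  simp only [differential_apply, pderiv_map, ← map_eval, map_sum, map_mul, Function.comp_apply]

lemma polarization_map (φ : R →+* S) (F : MvPolynomial (Fin n) R) (u v w : Fin n → R) :
    polarization (map φ F) (φ ∘ u) (φ ∘ v) (φ ∘ w) = φ (polarization F u v w) := by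
  have hadd : φ ∘ u + φ ∘ v = φ ∘ (u + v) := by ext i; simp
  simp only [polarization, hadd, differential_map, map_sub]

lemma eval_add_of_isHomogeneous_one (hF : F.IsHomogeneous 1) (u v : Fin n → R) :
    eval (u + v) F = eval u F + eval v F := by
  rw [← mem_homogeneousSubmodule, homogeneousSubmodule_one_eq_span_X] at hF
  induction hF using Submodule.span_induction with
  | mem _ h => obtain ⟨i, rfl⟩ := h; simp
  | zero => simp
  | add _ _ _ _ hF hG => simp only [map_add, hF, hG]; ring
  | smul a _ _ hF => simp only [smul_eval, hF]; ring

lemma differential_of_isHomogeneous_one (hF : F.IsHomogeneous 1) (u v : Fin n → R) :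
    differential F u v = eval v F := by
  rw [← mem_homogeneousSubmodule, homogeneousSubmodule_one_eq_span_X] at hF
  induction hF using Submodule.span_induction with
  | mem _ h =>
    obtain ⟨i, rfl⟩ := h
    simp [differential_apply, pderiv_X, Pi.single_apply, apply_ite]
  | zero => simp [differential]
  | add _ _ _ _ hF hG => rw [differential_add_poly, LinearMap.add_apply, hF, hG, map_add]
  | smul a _ _ hF =>
    simp only [differential_apply, Derivation.map_smul, smul_eval, mul_assoc,
      ← Finset.mul_sum] at hF ⊢
    rw [hF]

/-- A cubic form is a sum of products of three linear forms, for which this is the Leibniz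
rule. -/
lemma eval_add_of_isHomogeneous_three (hF : F.IsHomogeneous 3) (u v : Fin n → R) :
    eval (u + v) F = eval u F + differential F u v + differential F v u + eval v F := by
  rw [← mem_homogeneousSubmodule, ← homogeneousSubmodule_one_pow, pow_succ, pow_two] at hF
  induction hF using Submodule.mul_induction_on' with
  | add _ _ _ _ hF hG =>
    simp only [map_add, differential_add_poly, LinearMap.add_apply, hF, hG]; ring
  | mem_mul_mem q hq l hl =>
    rw [mem_homogeneousSubmodule] at hl
    induction hq using Submodule.mul_induction_on' with
    | add _ _ _ _ hF hG =>
      simp only [add_mul, map_add, differential_add_poly, LinearMap.add_apply, hF, hG]; ring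
    | mem_mul_mem l₁ h₁ l₂ h₂ =>
      rw [mem_homogeneousSubmodule] at h₁ h₂
      simp only [differential_mul, map_mul, differential_of_isHomogeneous_one, hl, h₁, h₂,
        eval_add_of_isHomogeneous_one]
      ring

lemma differential_smul_left (hF : F.IsHomogeneous 3) (a : R) (u v : Fin n → R) :
    differential F (a • u) v = a ^ 2 * differential F u v := by
  simp only [differential_apply, eval_smul_of_isHomogeneous (hF.pderiv (i := _)), Finset.mul_sum,
    mul_assoc]

lemma differential_self (hF : F.IsHomogeneous 3) (u : Fin n → R) :
    differential F u u = 3 * eval u F := by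
  have h := congrArg (eval u) hF.sum_X_mul_pderiv
  simpa [differential_apply, mul_comm] using h

lemma differential_add_left (F : MvPolynomial (Fin n) R) (u v w : Fin n → R) :
    differential F (u + v) w =
      differential F u w + differential F v w + polarization F u v w := by
  rw [polarization]; ring

lemma polarization_comm (F : MvPolynomial (Fin n) R) (u v w : Fin n → R) :
    polarization F u v w = polarization F v u w := by
  rw [polarization, polarization, add_comm u v]; ring

/-- Expand `F (u + v + w)` in two ways. -/
lemma polarization_rotate (hF : F.IsHomogeneous 3) (u v w : Fin n → R) :
    polarization F u v w = polarization F v w u := by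
  have h := congrArg (fun z => eval z F) (add_assoc u v w)
  simp only [eval_add_of_isHomogeneous_three hF, map_add, differential_add_left] at h
  linear_combination h

lemma polarization_reverse (hF : F.IsHomogeneous 3) (u v w : Fin n → R) :
    polarization F u v w = polarization F w v u := by
  rw [polarization_rotate hF, polarization_comm]

lemma polarization_right_comm (hF : F.IsHomogeneous 3) (u v w : Fin n → R) :
    polarization F u v w = polarization F u w v := by
  rw [polarization_reverse hF, ← polarization_rotate hF]

lemma polarization_add_right (F : MvPolynomial (Fin n) R) (u v w w' : Fin n → R) :
    polarization F u v (w + w') = polarization F u v w + polarization F u v w' := by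
  simp only [polarization, map_add]; ring

lemma polarization_smul_right (F : MvPolynomial (Fin n) R) (a : R) (u v w : Fin n → R) :
    polarization F u v (a • w) = a * polarization F u v w := by
  simp only [polarization, map_smul, smul_eq_mul]; ring

lemma polarization_add_left (hF : F.IsHomogeneous 3) (u u' v w : Fin n → R) :
    polarization F (u + u') v w = polarization F u v w + polarization F u' v w := by
  simp only [polarization_rotate hF _ v w, polarization_add_right]

lemma polarization_smul_left (hF : F.IsHomogeneous 3) (a : R) (u v w : Fin n → R) :
    polarization F (a • u) v w = a * polarization F u v w := by
  simp only [polarization_rotate hF _ v w, polarization_smul_right]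

lemma polarization_add_mid (hF : F.IsHomogeneous 3) (u v v' w : Fin n → R) :
    polarization F u (v + v') w = polarization F u v w + polarization F u v' w := by
  simp only [polarization_comm F u, polarization_add_left hF]

lemma polarization_smul_mid (hF : F.IsHomogeneous 3) (a : R) (u v w : Fin n → R) :
    polarization F u (a • v) w = a * polarization F u v w := by
  simp only [polarization_comm F u, polarization_smul_left hF]

lemma polarization_self (hF : F.IsHomogeneous 3) (u w : Fin n → R) :
    polarization F u u w = 2 * differential F u w := by
  rw [polarization, ← two_smul R u, differential_smul_left hF]; ring

lemma polarization_self_right (hF : F.IsHomogeneous 3) (u w : Fin n → R) :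
    polarization F w u u = 2 * differential F u w := by
  rw [polarization_rotate hF, polarization_self hF]

lemma eval_smul_add_smul (hF : F.IsHomogeneous 3) (s t : R) (u v : Fin n → R) :
    eval (s • u + t • v) F = s ^ 3 * eval u F + s ^ 2 * t * differential F u v
      + s * t ^ 2 * differential F v u + t ^ 3 * eval v F := by
  simp only [eval_add_of_isHomogeneous_three hF, eval_smul_of_isHomogeneous hF,
    differential_smul_left hF, map_smul, smul_eq_mul]
  ring

lemma differential_smul_add_smul (hF : F.IsHomogeneous 3) (s t : R) (u v w : Fin n → R) :
    differential F (s • u + t • v) w = s ^ 2 * differential F u w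
      + s * t * polarization F u v w + t ^ 2 * differential F v w := by
  simp only [differential_add_left, differential_smul_left hF, polarization_smul_left hF,
    polarization_smul_mid hF]
  ring

end Polarization

/-! ### Lines on the surface -/

section Lines

variable {K : Type*} [Field K] {n : ℕ} {F : MvPolynomial (Fin n) K}
  {W : Submodule K (Fin n → K)} {u v w : Fin n → K}

lemma lineRestrict_eq_sum (hF : F.IsHomogeneous 3) (u v : Fin n → K) :
    lineRestrict F u v = C (eval u F) * X 0 ^ 3 + C (differential F u v) * (X 0 ^ 2 * X 1)
      + C (differential F v u) * (X 0 * X 1 ^ 2) + C (eval v F) * X 1 ^ 3 := by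
  have hparam : lineRestrict F u v =
      eval ((X 0 : MvPolynomial (Fin 2) K) • (C ∘ u) + (X 1 : MvPolynomial (Fin 2) K) • (C ∘ v))
        (map C F) := by
    rw [lineRestrict, eval_map, aeval_def, algebraMap_eq]
    congr 1
    ext i : 1
    simp [mul_comm]
  rw [hparam, eval_smul_add_smul (hF.map C), ← map_eval, ← map_eval, differential_map,
    differential_map]
  ring

lemma eval_lineRestrict (F : MvPolynomial (Fin n) K) (u v : Fin n → K) (s t : K) :
    eval ![s, t] (lineRestrict F u v) = eval (s • u + t • v) F := by
  rw [lineRestrict, aeval_eq_eval₂Hom, map_eval₂Hom, algebraMap_eq]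
  congr 2
  · ext; simp
  · ext i; simp [mul_comm]

lemma lineOnSurf_span_pair (hF : F.IsHomogeneous 3) (hu : eval u F = 0) (hv : eval v F = 0)
    (huv : differential F u v = 0) (hvu : differential F v u = 0) :
    LineOnSurf F (Submodule.span K {u, v}) := by
  intro p q hp hq
  obtain ⟨a, b, rfl⟩ := Submodule.mem_span_pair.mp hp
  obtain ⟨c, d, rfl⟩ := Submodule.mem_span_pair.mp hq
  have huvu : polarization F u v u = 0 := by
    rw [← polarization_rotate hF u u v, polarization_self hF, huv, mul_zero]
  have huvv : polarization F u v v = 0 := by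
    rw [polarization_self_right hF, hvu, mul_zero]
  rw [lineRestrict_eq_sum hF]
  simp [eval_smul_add_smul hF, differential_smul_add_smul hF, polarization_add_right,
    polarization_smul_right, differential_self hF, *]

lemma LineOnSurf.eval_eq_zero (hW : LineOnSurf F W) (hu : u ∈ W) : eval u F = 0 := by
  simpa [hW u u hu hu] using (eval_lineRestrict F u u 1 0).symm

lemma LineOnSurf.differential_eq_zero (hF : F.IsHomogeneous 3) (hW : LineOnSurf F W)
    (hu : u ∈ W) (hv : v ∈ W) : differential F u v = 0 := by
  have h := congrArg (fun G => eval ![1, 0] (pderiv 1 G)) (lineRestrict_eq_sum hF u v)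
  simpa [hW u v hu hv, pderiv_X] using h.symm

lemma LineOnSurf.polarization_eq_zero (hF : F.IsHomogeneous 3) (hW : LineOnSurf F W)
    (hu : u ∈ W) (hv : v ∈ W) (hw : w ∈ W) : polarization F u v w = 0 := by
  simp [polarization, hW.differential_eq_zero hF, W.add_mem, *]

end Lines

/-! ### The span, in terms of vectors -/

section InSpan

variable {K : Type*} [Field K] {n : ℕ} {F : MvPolynomial (Fin n) K}
  {B : Set (Projectivization K (Fin n → K))} {u v p q : Fin n → K}

/-- The projective point represented by `v` lies in `Span F B`. The zero vector, which
represents no point, satisfies this vacuously. -/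
def InSpan (F : MvPolynomial (Fin n) K) (B : Set (Projectivization K (Fin n → K)))
    (v : Fin n → K) : Prop :=
  ∀ hv : v ≠ 0, Projectivization.mk K v hv ∈ Span F B

lemma inSpan_rep_iff {P : Projectivization K (Fin n → K)} : InSpan F B P.rep ↔ P ∈ Span F B := by
  simp [InSpan, P.rep_nonzero]

lemma inSpan_smul_iff {a : K} (ha : a ≠ 0) : InSpan F B (a • v) ↔ InSpan F B v := by
  have hmk (hv : v ≠ 0) : Projectivization.mk K (a • v) (smul_ne_zero ha hv) =
      Projectivization.mk K v hv :=
    (Projectivization.mk_eq_mk_iff' ..).mpr ⟨a, rfl⟩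
  exact ⟨fun h hv => hmk hv ▸ h (smul_ne_zero ha hv),
    fun h hav => (hmk (right_ne_zero_of_smul hav)).symm ▸ h (right_ne_zero_of_smul hav)⟩

lemma InSpan.smul (h : InSpan F B v) (a : K) : InSpan F B (a • v) := by
  rcases eq_or_ne a 0 with rfl | ha
  · exact fun h0 => absurd (zero_smul K v) h0
  · exact (inSpan_smul_iff ha).mpr h

lemma isLine_span_pair (huv : LinearIndependent K ![u, v]) :
    IsLine (Submodule.span K {u, v}) := by
  have h := finrank_span_eq_card huv
  rwa [Matrix.range_cons_cons_empty, Fintype.card_fin] at h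

lemma InSpan.third_point {d : ℕ} (hF : F.IsHomogeneous d) (huv : LinearIndependent K ![u, v])
    (hne : lineRestrict F u v ≠ 0) {c : K} {l m : Fin 3 → K}
    (hfac : lineRestrict F u v = C c * ∏ k : Fin 3, (C (m k) * X 0 - C (l k) * X 1))
    (h₀ : InSpan F B (l 0 • u + m 0 • v)) (h₁ : InSpan F B (l 1 • u + m 1 • v)) :
    InSpan F B (l 2 • u + m 2 • v) := by
  intro _
  have hprod := hne
  rw [hfac, mul_ne_zero_iff, Finset.prod_ne_zero_iff] at hprod
  have hpt (k : Fin 3) : l k • u + m k • v ≠ 0 := fun h0 =>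
    hprod.2 k (Finset.mem_univ k) (by simp [LinearIndependent.pair_iff.mp huv _ _ h0])
  have hu : u ∈ Submodule.span K {u, v} := Submodule.mem_span_pair.mpr ⟨1, 0, by simp⟩
  have hv : v ∈ Submodule.span K {u, v} := Submodule.mem_span_pair.mpr ⟨0, 1, by simp⟩
  have heval : eval (l 2 • u + m 2 • v) F = 0 := by
    rw [← eval_lineRestrict, hfac]
    simp [Fin.prod_univ_three, mul_comm]
  exact SpanMem.secant _ _ _ _ (isLine_span_pair huv) (fun h => hne (h u v hu hv))
    (h₀ (hpt 0)) (h₁ (hpt 1)) (mk_mem_zeroSet hF (hpt 2) heval)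
    ⟨u, v, hu, hv, huv, c, l, m, hpt, by simpa using hprod.1, hfac, rfl, rfl, rfl⟩

lemma linearIndependent_pair_of_map_ne_zero {D : (Fin n → K) →ₗ[K] K} (hu0 : u ≠ 0)
    (hu : D u = 0) (hv : D v ≠ 0) : LinearIndependent K ![u, v] :=
  (LinearIndependent.pair_iff' hu0).mpr fun a hav => hv (by rw [← hav, map_smul, hu, smul_zero])

lemma linearIndependent_of_differential_ne_zero (hF : F.IsHomogeneous 3) (hu : eval u F = 0)
    (huv : differential F u v ≠ 0) : LinearIndependent K ![u, v] := by
  refine linearIndependent_pair_of_map_ne_zero ?_ (by rw [differential_self hF, hu, mul_zero]) huv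
  rintro rfl
  exact huv (by simpa using differential_smul_left hF 0 0 v)

lemma lineRestrict_ne_zero (hF : F.IsHomogeneous 3) (huv : differential F u v ≠ 0) :
    lineRestrict F u v ≠ 0 := by
  intro h0
  have h := congrArg (fun G => eval ![1, 0] (pderiv 1 G)) (lineRestrict_eq_sum hF u v)
  exact huv (by simpa [h0, pderiv_X] using h.symm)

/-- If `q` lies on the tangent plane at `p`, the line `pq` meets the surface in `2p + q`. -/
lemma InSpan.of_tangent (hF : F.IsHomogeneous 3) (hp : eval p F = 0) (hq : eval q F = 0)
    (hpq : differential F p q = 0) (hqp : differential F q p ≠ 0) (hpB : InSpan F B p) :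
    InSpan F B q := by
  have h := InSpan.third_point (B := B) hF (linearIndependent_of_differential_ne_zero hF hq hqp)
    (lineRestrict_ne_zero hF hqp) (c := -differential F q p) (l := ![0, 0, 1]) (m := ![1, 1, 0])
    (by
        rw [lineRestrict_eq_sum hF, hp, hq, hpq]
        simp only [Fin.prod_univ_three, Matrix.cons_val, map_zero, map_one, map_neg]; ring)
  simpa [hpB] using h

/-- If `p` and `q` are on the surface, the third point of the line `pq` is
`(-D q p) p + (D p q) q`, where `D` is the differential. -/
lemma InSpan.of_secant (hF : F.IsHomogeneous 3) (hp : eval p F = 0) (hq : eval q F = 0)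
    (hqp : differential F q p ≠ 0) (hpB : InSpan F B p)
    (hB : InSpan F B (-differential F p q • q + differential F q p • p)) :
    InSpan F B q := by
  have h := InSpan.third_point (B := B) hF (linearIndependent_of_differential_ne_zero hF hq hqp)
    (lineRestrict_ne_zero hF hqp) (c := -1) (l := ![0, -differential F p q, 1])
    (m := ![1, differential F q p, 0])
    (by
        rw [lineRestrict_eq_sum hF, hp, hq]
        simp only [Fin.prod_univ_three, Matrix.cons_val, map_zero, map_one, map_neg]; ring)
  exact by simpa using h (by simpa using hpB) (by simpa using hB)

end InSpan

/-! ### The residual conic of a plane through a line of the surface -/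

section ResidualConic

/-- The discriminant of the ternary quadratic form
`A x² + B y² + C w² + f y w + g x w + h x y`, normalized so that it detects singular conics also
in characteristic `2`. -/
def conicDisc {R : Type*} [CommRing R] (A B C f g h : R) : R :=
  4 * A * B * C + f * g * h - A * f ^ 2 - B * g ^ 2 - C * h ^ 2

/-- If `r` and `q` span a line on the cubic surface `F = 0`, the plane spanned by `v`, `r`, `q`
meets the surface in that line, `x = 0` in the coordinates `x v + y r + w q`, and in a residual
conic, see `eval_plane`. This is the discriminant of that conic. -/
def residualDisc {R : Type*} [CommRing R] {n : ℕ} (F : MvPolynomial (Fin n) R)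
    (v r q : Fin n → R) : R :=
  conicDisc (eval v F) (differential F r v) (differential F q v) (polarization F v r q)
    (differential F v q) (differential F v r)

section CommRing

variable {R S : Type*} [CommRing R] [CommRing S] {n : ℕ} {F : MvPolynomial (Fin n) R}

lemma residualDisc_map (φ : R →+* S) (F : MvPolynomial (Fin n) R) (v r q : Fin n → R) :
    residualDisc (map φ F) (φ ∘ v) (φ ∘ r) (φ ∘ q) = φ (residualDisc F v r q) := by
  simp only [residualDisc, conicDisc, differential_map, polarization_map, ← map_eval, map_sub,
    map_add, map_mul, map_pow, map_ofNat]

lemma residualDisc_smul (hF : F.IsHomogeneous 3) (a : R) (v r q : Fin n → R) :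
    residualDisc F (a • v) r q = a ^ 5 * residualDisc F v r q := by
  simp only [residualDisc, conicDisc, eval_smul_of_isHomogeneous hF, differential_smul_left hF,
    polarization_smul_left hF, map_smul, smul_eq_mul]
  ring

lemma residualDisc_basis_change (hF : F.IsHomogeneous 3) (a b c d : R) (v r q : Fin n → R) :
    residualDisc F v (a • r + b • q) (c • r + d • q) =
      (a * d - b * c) ^ 2 * residualDisc F v r q := by
  simp only [residualDisc, conicDisc, differential_smul_add_smul hF, polarization_add_mid hF,
    polarization_smul_mid hF, polarization_add_right, polarization_smul_right, map_add, map_smul,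
    smul_eq_mul, polarization_rotate hF r q v, polarization_comm F q v r,
    polarization_self_right hF, polarization_right_comm hF v q r]
  ring

end CommRing

variable {K : Type*} [Field K] {n : ℕ} {F : MvPolynomial (Fin n) K}
  {W : Submodule K (Fin n → K)} {B : Set (Projectivization K (Fin n → K))}
  {v r q : Fin n → K}

lemma eval_plane (hF : F.IsHomogeneous 3) (hW : LineOnSurf F W) (hr : r ∈ W) (hq : q ∈ W)
    (x y w : K) :
    eval (x • v + (y • r + w • q)) F =
      x * (eval v F * x ^ 2 + differential F r v * y ^ 2 + differential F q v * w ^ 2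
        + polarization F v r q * (y * w) + differential F v q * (x * w)
        + differential F v r * (x * y)) := by
  have hrq : y • r + w • q ∈ W := W.add_mem (W.smul_mem _ hr) (W.smul_mem _ hq)
  rw [eval_add_of_isHomogeneous_three hF, hW.eval_eq_zero hrq, eval_smul_of_isHomogeneous hF,
    differential_smul_left hF, map_smul, differential_smul_add_smul hF, map_add, map_smul,
    map_smul, polarization_rotate hF v r q]
  simp only [smul_eq_mul]
  ring

lemma InSpan.of_mem_conic (hF : F.IsHomogeneous 3) (hW : LineOnSurf F W) (hr : r ∈ W)
    (hq : q ∈ W) (hqv : differential F q v = 0) (hdisc : residualDisc F v r q ≠ 0)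
    (hqB : InSpan F B q) {x y w : K} (hx : x ≠ 0) (hz : eval (x • v + (y • r + w • q)) F = 0) :
    InSpan F B (x • v + (y • r + w • q)) := by
  have hu : y • r + w • q ∈ W := W.add_mem (W.smul_mem _ hr) (W.smul_mem _ hq)
  have hqz : differential F q (x • v + (y • r + w • q)) = 0 := by
    rw [map_add, map_smul, hqv, smul_zero, hW.differential_eq_zero hF hq hu, add_zero]
  have hzq : differential F (x • v + (y • r + w • q)) q =
      x * (differential F v q * x + polarization F v r q * y) := by
    rw [differential_add_left, differential_smul_left hF, hW.differential_eq_zero hF hu hq,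
      polarization_smul_left hF, polarization_add_mid hF, polarization_smul_mid hF,
      polarization_smul_mid hF, polarization_self_right hF, hqv]
    ring
  refine hqB.of_tangent hF (hW.eval_eq_zero hq) hz hqz fun h0 => hdisc ?_
  rw [hzq, mul_eq_zero, or_iff_right hx] at h0
  rw [eval_plane hF hW hr hq, mul_eq_zero, or_iff_right hx, hqv] at hz
  rw [residualDisc, conicDisc, hqv]
  refine (mul_eq_zero.mp ?_).resolve_left (pow_ne_zero 2 hx)
  linear_combination (-polarization F v r q ^ 2) * hz +
    (polarization F v r q * differential F v r * x +
      differential F r v * (polarization F v r q * y - differential F v q * x) +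
      polarization F v r q ^ 2 * w) * h0

lemma exists_mem_conic (hF : F.IsHomogeneous 3) (hW : LineOnSurf F W) (hr : r ∈ W)
    (hq : q ∈ W) (hqv : differential F q v = 0) (hdisc : residualDisc F v r q ≠ 0) :
    ∃ y w : K, eval ((1 : K) • v + (y • r + w • q)) F = 0 := by
  obtain ⟨y, hy⟩ : ∃ y, polarization F v r q * y + differential F v q ≠ 0 := by
    by_contra! h
    have hg : differential F v q = 0 := by simpa using h 0
    have hf : polarization F v r q = 0 := by simpa [hg] using h 1
    exact hdisc (by simp [residualDisc, conicDisc, hqv, hg, hf])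
  obtain ⟨w, hw⟩ : ∃ w, (polarization F v r q * y + differential F v q) * w =
      -(eval v F + differential F r v * y ^ 2 + differential F v r * y) :=
    ⟨_, mul_div_cancel₀ _ hy⟩
  refine ⟨y, w, ?_⟩
  rw [eval_plane hF hW hr hq, hqv]
  linear_combination hw

/-- Each point of the residual conic off the line is on the tangent plane of `q`, and a secant
through `r` and such a point meets the surface in a further one. -/
lemma InSpan.of_mem_line (hF : F.IsHomogeneous 3) (hW : LineOnSurf F W) (hr : r ∈ W)
    (hq : q ∈ W) (hqv : differential F q v = 0) (hrv : differential F r v ≠ 0)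
    (hdisc : residualDisc F v r q ≠ 0) (hqB : InSpan F B q) : InSpan F B r := by
  obtain ⟨y, w, hz⟩ := exists_mem_conic hF hW hr hq hqv hdisc
  set z := (1 : K) • v + (y • r + w • q) with hz_def
  have hrz : differential F r z = differential F r v := by
    rw [hz_def, one_smul, map_add,
      hW.differential_eq_zero hF hr (W.add_mem (W.smul_mem _ hr) (W.smul_mem _ hq)), add_zero]
  have hthird : eval (-differential F z r • r + differential F r z • z) F = 0 := by
    rw [eval_smul_add_smul hF, hW.eval_eq_zero hr, hz]
    ring
  refine (hqB.of_mem_conic hF hW hr hq hqv hdisc one_ne_zero hz).of_secant hF hz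
    (hW.eval_eq_zero hr) (hrz ▸ hrv) ?_
  have hexpand : -differential F z r • r + differential F r z • z = differential F r z • v +
      ((differential F r z * y - differential F z r) • r + (differential F r z * w) • q) := by
    conv_lhs => rw [hz_def]
    module
  rw [hexpand] at hthird ⊢
  exact hqB.of_mem_conic hF hW hr hq hqv hdisc (hrz ▸ hrv) hthird

end ResidualConic

/-! ### The pencil of tangent planes along a line -/

section Pencil

/-- A vector of the plane spanned by `v` and `m` that is tangent to `F = 0` at `q`. -/
def tangentVec {R : Type*} [CommRing R] {n : ℕ} (F : MvPolynomial (Fin n) R)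
    (v m q : Fin n → R) : Fin n → R :=
  differential F q v • m - differential F q m • v

/-- For `r`, `q` spanning a line of the cubic surface `F = 0`, the discriminant of the residual
conic in the tangent plane at `q + t r`, as a polynomial in `t`. The ambient space is spanned by
the line together with `v` and `m`. -/
def pencilDisc {R : Type*} [CommRing R] {n : ℕ} (F : MvPolynomial (Fin n) R)
    (v m r q : Fin n → R) : Polynomial R :=
  residualDisc (map Polynomial.C F)
    (tangentVec (map Polynomial.C F) (Polynomial.C ∘ v) (Polynomial.C ∘ m)
      (Polynomial.C ∘ q + (Polynomial.X : Polynomial R) • (Polynomial.C ∘ r)))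
    (Polynomial.C ∘ r) (Polynomial.C ∘ q)

variable {R S : Type*} [CommRing R] [CommRing S] {n : ℕ} {F : MvPolynomial (Fin n) R}

lemma tangentVec_map (φ : R →+* S) (F : MvPolynomial (Fin n) R) (v m q : Fin n → R) :
    tangentVec (map φ F) (φ ∘ v) (φ ∘ m) (φ ∘ q) = φ ∘ tangentVec F v m q := by
  ext i
  simp [tangentVec, differential_map]

lemma differential_tangentVec (F : MvPolynomial (Fin n) R) (v m q : Fin n → R) :
    differential F q (tangentVec F v m q) = 0 := by
  simp only [tangentVec, map_sub, map_smul, smul_eq_mul]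
  ring

lemma eval_pencilDisc (F : MvPolynomial (Fin n) R) (v m r q : Fin n → R) (t : R) :
    (pencilDisc F v m r q).eval t = residualDisc F (tangentVec F v m (q + t • r)) r q := by
  have hF : map (Polynomial.evalRingHom t) (map Polynomial.C F) = F := by
    rw [map_map]
    convert map_id F
    ext
    simp
  have hconst (u : Fin n → R) : Polynomial.evalRingHom t ∘ Polynomial.C ∘ u = u := by
    ext i
    simp
  have hpoint : Polynomial.evalRingHom t ∘
      (Polynomial.C ∘ q + (Polynomial.X : Polynomial R) • (Polynomial.C ∘ r)) = q + t • r := by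
    ext i
    simp [mul_comm t]
  rw [← Polynomial.coe_evalRingHom, pencilDisc, ← residualDisc_map, ← tangentVec_map, hF, hconst,
    hconst, hconst, hconst, hpoint]

lemma differential_comp_C_add (hF : F.IsHomogeneous 3) (q r u : Fin n → R) :
    differential (map Polynomial.C F)
      (Polynomial.C ∘ q + (Polynomial.X : Polynomial R) • (Polynomial.C ∘ r)) (Polynomial.C ∘ u) =
      Polynomial.C (differential F q u) + Polynomial.X * Polynomial.C (polarization F q r u)
        + Polynomial.X ^ 2 * Polynomial.C (differential F r u) := by
  have h := differential_smul_add_smul (hF.map Polynomial.C) 1 Polynomial.X (Polynomial.C ∘ q)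
    (Polynomial.C ∘ r) (Polynomial.C ∘ u)
  simpa only [one_smul, one_pow, one_mul, differential_map, polarization_map] using h

lemma natDegree_pencilDisc_le (hF : F.IsHomogeneous 3) (v m r q : Fin n → R) :
    (pencilDisc F v m r q).natDegree ≤ 10 := by
  have hF' := hF.map Polynomial.C
  simp only [pencilDisc, residualDisc, conicDisc, tangentVec, differential_comp_C_add hF,
    sub_eq_add_neg, ← neg_smul, eval_smul_add_smul hF', differential_smul_add_smul hF',
    polarization_add_left hF', polarization_smul_left hF', map_add, map_smul, smul_eq_mul,
    differential_map, polarization_map, ← map_eval]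
  compute_degree

lemma exists_conicDisc_eq (A B C f f' g h k a b : R) :
    ∃ E, conicDisc (a * (a * A + b ^ 2 * k)) (a * B) (a * C) (a * f' - b * f) (a * g) (a * h) =
      a * (a * E - b ^ 4 * f ^ 2 * k) :=
  ⟨4 * a * (a * A + b ^ 2 * k) * B * C + (a * f' - b * f) * g * h - A * (a * f' - b * f) ^ 2
    - b ^ 2 * k * f' * (a * f' - 2 * b * f) - a * B * g ^ 2 - a * C * h ^ 2, by
    rw [conicDisc]; ring⟩

lemma residualDisc_smul_sub_smul (hF : F.IsHomogeneous 3) {v r q : Fin n → R}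
    (hv : eval v F = 0) (hvr : differential F v r = 0) (hvq : differential F v q = 0)
    (hrv : differential F r v = 0) (hqv : differential F q v = 0) (m : Fin n → R) (a b : R) :
    ∃ E, residualDisc F (a • m - b • v) r q =
      a * (a * E - b ^ 4 * polarization F v r q ^ 2 * differential F v m) := by
  obtain ⟨E, hE⟩ := exists_conicDisc_eq (a * eval m F - b * differential F m v)
    (differential F r m) (differential F q m) (polarization F v r q) (polarization F m r q)
    (a * differential F m q - b * polarization F m v q)
    (a * differential F m r - b * polarization F m v r) (differential F v m) a b
  refine ⟨E, ?_⟩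
  rw [← hE, residualDisc, sub_eq_add_neg, ← neg_smul]
  congr 1 <;>
    simp only [eval_smul_add_smul hF, differential_smul_add_smul hF, polarization_add_left hF,
      polarization_smul_left hF, map_add, map_smul, smul_eq_mul, hv, hvr, hvq, hrv, hqv] <;>
    ring

variable {K : Type*} [Field K] {F : MvPolynomial (Fin n) K}
  {W : Submodule K (Fin n → K)} {B : Set (Projectivization K (Fin n → K))}
  {v m r q : Fin n → K}

lemma differential_add_smul_of_differential_eq_zero (hF : F.IsHomogeneous 3)
    (hqv : differential F q v = 0) (hrv : differential F r v = 0) (t : K) :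
    differential F (q + t • r) v = t * polarization F v r q := by
  rw [differential_add_left, differential_smul_left hF, polarization_smul_mid hF, hqv, hrv,
    polarization_reverse hF]
  ring

lemma pencilDisc_ne_zero_of_residualDisc_ne_zero (hF : F.IsHomogeneous 3)
    (hqv : differential F q v = 0) (hqm : differential F q m ≠ 0)
    (hdisc : residualDisc F v r q ≠ 0) : pencilDisc F v m r q ≠ 0 := by
  intro h0
  have h := eval_pencilDisc F v m r q 0
  rw [h0, Polynomial.eval_zero, zero_smul, add_zero, tangentVec, hqv, zero_smul, zero_sub,
    ← neg_smul, residualDisc_smul hF] at h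
  exact mul_ne_zero (pow_ne_zero 5 (neg_ne_zero.mpr hqm)) hdisc h.symm

lemma pencilDisc_ne_zero_of_triangle (hF : F.IsHomogeneous 3)
    (hv : eval v F = 0) (hvr : differential F v r = 0) (hvq : differential F v q = 0)
    (hrv : differential F r v = 0) (hqv : differential F q v = 0)
    (hT : polarization F v r q ≠ 0) (hvm : differential F v m ≠ 0)
    (hqm : differential F q m ≠ 0) : pencilDisc F v m r q ≠ 0 := by
  intro h0
  have hα : differential (map Polynomial.C F)
      (Polynomial.C ∘ q + (Polynomial.X : Polynomial K) • (Polynomial.C ∘ r)) (Polynomial.C ∘ v) =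
      Polynomial.X * Polynomial.C (polarization F v r q) := by
    rw [differential_comp_C_add hF, hqv, hrv, polarization_reverse hF]
    simp
  obtain ⟨E, hE⟩ := residualDisc_smul_sub_smul (hF.map Polynomial.C) (v := Polynomial.C ∘ v)
    (r := Polynomial.C ∘ r) (q := Polynomial.C ∘ q) (by rw [← map_eval, hv, map_zero])
    (by simp [differential_map, hvr]) (by simp [differential_map, hvq])
    (by simp [differential_map, hrv]) (by simp [differential_map, hqv]) (Polynomial.C ∘ m)
    (Polynomial.X * Polynomial.C (polarization F v r q))
    (differential (map Polynomial.C F)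
      (Polynomial.C ∘ q + (Polynomial.X : Polynomial K) • (Polynomial.C ∘ r)) (Polynomial.C ∘ m))
  rw [pencilDisc, tangentVec, hα, hE, mul_eq_zero, or_iff_right (by simpa using hT)] at h0
  have h := congrArg (Polynomial.eval 0) h0
  simp [differential_comp_C_add hF, polarization_map, differential_map, hqm, hT, hvm] at h

lemma exists_ne_zero_eval_ne_zero {p : Polynomial K} (hp : p ≠ 0)
    (hK : (p.natDegree + 1 : ℕ) < Cardinal.mk K) : ∃ t ≠ 0, p.eval t ≠ 0 := by
  obtain ⟨t, ht⟩ := Polynomial.exists_eval_ne_zero_of_natDegree_lt_card (p * Polynomial.X)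
    (mul_ne_zero hp Polynomial.X_ne_zero) (by rwa [Polynomial.natDegree_mul_X hp])
  rw [Polynomial.eval_mul_X] at ht
  exact ⟨t, right_ne_zero_of_mul ht, left_ne_zero_of_mul ht⟩

/-- Some `q + t r` in the span has a smooth residual conic in its tangent plane, and `r` is
reached through that conic. -/
lemma InSpan.of_pencil (hK : 11 < Cardinal.mk K) (hF : F.IsHomogeneous 3) (hW : LineOnSurf F W)
    (hr : r ∈ W) (hq : q ∈ W) (hqv : differential F q v = 0) (hrv : differential F r v = 0)
    (hT : polarization F v r q ≠ 0) (hrm : differential F r m ≠ 0)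
    (hdisc : pencilDisc F v m r q ≠ 0) (hB : ∀ t : K, t ≠ 0 → InSpan F B (q + t • r)) :
    InSpan F B r := by
  obtain ⟨t, ht0, ht⟩ := exists_ne_zero_eval_ne_zero hdisc
    (lt_of_le_of_lt (by exact_mod_cast Nat.succ_le_succ (natDegree_pencilDisc_le hF v m r q)) hK)
  rw [eval_pencilDisc] at ht
  refine (hB t ht0).of_mem_line hF hW hr (W.add_mem hq (W.smul_mem t hr))
    (differential_tangentVec F v m _) ?_ ?_
  · have hqtr := differential_add_smul_of_differential_eq_zero hF hqv hrv t
    rw [tangentVec, map_sub, map_smul, map_smul, hrv, smul_zero, sub_zero, hqtr, smul_eq_mul]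
    exact mul_ne_zero (mul_ne_zero ht0 hT) hrm
  · have h := residualDisc_basis_change hF 1 0 t 1 (tangentVec F v m (q + t • r)) r q
    simp only [one_smul, zero_smul, add_zero, zero_mul, mul_one, sub_zero, one_pow, one_mul,
      add_comm (t • r) q] at h
    rwa [h]

end Pencil

/-! ### Smooth residual conic -/

section SmoothConic

variable {K : Type*} [Field K] {n : ℕ} {F : MvPolynomial (Fin n) K}
  {W : Submodule K (Fin n → K)} {B : Set (Projectivization K (Fin n → K))}
  {v m r q : Fin n → K}

lemma InSpan.of_mem_line_of_smooth_conic (hK : 11 < Cardinal.mk K) (hF : F.IsHomogeneous 3)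
    (hW : LineOnSurf F W) (hr : r ∈ W) (hq : q ∈ W) (hqv : differential F q v = 0)
    (hqm : differential F q m ≠ 0) (hrm : differential F r v = 0 → differential F r m ≠ 0)
    (hdisc : residualDisc F v r q ≠ 0) (hqB : InSpan F B q) : InSpan F B r := by
  by_cases hrv : differential F r v = 0
  swap
  · exact hqB.of_mem_line hF hW hr hq hqv hrv hdisc
  have hT : polarization F v r q ≠ 0 := fun hT =>
    hdisc (by rw [residualDisc, conicDisc, hqv, hrv, hT]; ring)
  refine InSpan.of_pencil hK hF hW hr hq hqv hrv hT (hrm hrv)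
    (pencilDisc_ne_zero_of_residualDisc_ne_zero hF hqv hqm hdisc) fun t ht => ?_
  refine hqB.of_mem_line hF hW (W.add_mem hq (W.smul_mem t hr)) hq hqv ?_ ?_
  · rw [differential_add_smul_of_differential_eq_zero hF hqv hrv]
    exact mul_ne_zero ht hT
  · have h := residualDisc_basis_change hF t 1 0 1 v r q
    simp only [one_smul, zero_smul, zero_add, mul_zero, mul_one, sub_zero,
      add_comm (t • r) q] at h
    exact h ▸ mul_ne_zero (pow_ne_zero 2 ht) hdisc

lemma InSpan.of_mem_plane_of_smooth_conic (hK : 11 < Cardinal.mk K) (hF : F.IsHomogeneous 3)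
    (hW : LineOnSurf F W) (hr : r ∈ W) (hq : q ∈ W) (hqv : differential F q v = 0)
    (hm : ∀ u ∈ W, u ≠ 0 → differential F u v = 0 → differential F u m ≠ 0)
    (hq0 : q ≠ 0) (hdisc : residualDisc F v r q ≠ 0) (hqB : InSpan F B q) {x y w : K}
    (hz : eval (x • v + (y • r + w • q)) F = 0) : InSpan F B (x • v + (y • r + w • q)) := by
  by_cases hx : x = 0
  swap
  · exact hqB.of_mem_conic hF hW hr hq hqv hdisc hx hz
  rw [hx, zero_smul, zero_add]
  rcases eq_or_ne y 0 with rfl | hy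
  · rw [zero_smul, zero_add]
    exact hqB.smul w
  intro hu0
  have hu : y • r + w • q ∈ W := W.add_mem (W.smul_mem y hr) (W.smul_mem w hq)
  refine InSpan.of_mem_line_of_smooth_conic hK hF hW hu hq hqv (hm q hq hq0 hqv) (hm _ hu hu0)
    ?_ hqB hu0
  have h := residualDisc_basis_change hF y w 0 1 v r q
  simp only [one_smul, zero_smul, zero_add, mul_zero, mul_one, sub_zero] at h
  exact h ▸ mul_ne_zero (pow_ne_zero 2 hy) hdisc

end SmoothConic

/-! ### Triangles -/

section Triangle

variable {K : Type*} [Field K] {n : ℕ} {F : MvPolynomial (Fin n) K}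
  {W : Submodule K (Fin n → K)} {B : Set (Projectivization K (Fin n → K))}
  {v m r q a b e : Fin n → K}

/-- The plane with basis `a`, `b`, `e` meets the surface `F = 0` in the three sides of the triangle
with these vertices: in the coordinates `x a + y b + w e`, the form `F` is a nonzero multiple of
`x y w`. -/
structure IsTriangle (F : MvPolynomial (Fin n) K) (a b e : Fin n → K) : Prop where
  side_left : LineOnSurf F (Submodule.span K {a, b})
  side_mid : LineOnSurf F (Submodule.span K {b, e})
  side_right : LineOnSurf F (Submodule.span K {e, a})
  polarization_ne_zero : polarization F a b e ≠ 0

lemma IsTriangle.rotate (hF : F.IsHomogeneous 3) (h : IsTriangle F a b e) : IsTriangle F b e a :=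
  ⟨h.side_mid, h.side_right, h.side_left, polarization_rotate hF a b e ▸ h.polarization_ne_zero⟩

lemma IsTriangle.reverse (hF : F.IsHomogeneous 3) (h : IsTriangle F a b e) :
    IsTriangle F e b a where
  side_left := Set.pair_comm b e ▸ h.side_mid
  side_mid := Set.pair_comm a b ▸ h.side_left
  side_right := Set.pair_comm e a ▸ h.side_right
  polarization_ne_zero := polarization_reverse hF a b e ▸ h.polarization_ne_zero

lemma IsTriangle.eval_eq_zero (h : IsTriangle F a b e) : eval a F = 0 :=
  h.side_left.eval_eq_zero (Submodule.subset_span (by simp))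

lemma IsTriangle.differential_eq_zero (hF : F.IsHomogeneous 3) (h : IsTriangle F a b e) :
    differential F a b = 0 :=
  h.side_left.differential_eq_zero hF (Submodule.subset_span (by simp))
    (Submodule.subset_span (by simp))

lemma IsTriangle.differential_eq_zero' (hF : F.IsHomogeneous 3) (h : IsTriangle F a b e) :
    differential F b a = 0 :=
  h.side_left.differential_eq_zero hF (Submodule.subset_span (by simp))
    (Submodule.subset_span (by simp))

lemma IsTriangle.eval_eq (hF : F.IsHomogeneous 3) (h : IsTriangle F a b e) (x y w : K) :
    eval (x • a + (y • b + w • e)) F = x * y * w * polarization F a b e := by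
  rw [eval_plane hF h.side_mid (Submodule.subset_span (by simp))
    (Submodule.subset_span (by simp)), h.eval_eq_zero, h.differential_eq_zero hF,
    h.differential_eq_zero' hF, ((h.rotate hF).rotate hF).differential_eq_zero hF,
    ((h.rotate hF).rotate hF).differential_eq_zero' hF]
  ring

lemma IsTriangle.inSpan_side (hF : F.IsHomogeneous 3) (h : IsTriangle F a b e)
    (heB : InSpan F B e) {x y : K} (hx : x ≠ 0) (hy : y ≠ 0) : InSpan F B (x • a + y • b) := by
  have hbe := h.rotate hF
  have hea := hbe.rotate hF
  have hF0 : eval (x • a + y • b) F = 0 := by simpa using h.eval_eq hF x y 0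
  refine heB.of_tangent hF hea.eval_eq_zero hF0 ?_ ?_
  · simp [hea.differential_eq_zero hF, hbe.differential_eq_zero' hF]
  · rw [differential_smul_add_smul hF, hbe.differential_eq_zero hF,
      hea.differential_eq_zero' hF, mul_zero, mul_zero, zero_add, add_zero]
    exact mul_ne_zero (mul_ne_zero hx hy) h.polarization_ne_zero

lemma IsTriangle.inSpan_vertex (hK : 11 < Cardinal.mk K) (hF : F.IsHomogeneous 3)
    (h : IsTriangle F a b e) (ham : differential F a m ≠ 0) (hbm : differential F b m ≠ 0)
    (hem : differential F e m ≠ 0) (heB : InSpan F B e) : InSpan F B b := by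
  have hbe := h.rotate hF
  have hea := hbe.rotate hF
  have hT : polarization F e b a ≠ 0 := (h.reverse hF).polarization_ne_zero
  refine InSpan.of_pencil hK hF h.side_left (v := e) (q := a) (m := m)
    (Submodule.subset_span (by simp)) (Submodule.subset_span (by simp))
    (hea.differential_eq_zero' hF) (hbe.differential_eq_zero hF) hT hbm
    (pencilDisc_ne_zero_of_triangle hF hea.eval_eq_zero (hbe.differential_eq_zero' hF)
      (hea.differential_eq_zero hF) (hbe.differential_eq_zero hF) (hea.differential_eq_zero' hF)
      hT hem ham) fun t ht => ?_
  simpa using h.inSpan_side hF heB one_ne_zero ht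

lemma IsTriangle.inSpan_of_mem_plane (hK : 11 < Cardinal.mk K) (hF : F.IsHomogeneous 3)
    (h : IsTriangle F a b e) (ham : differential F a m ≠ 0) (hbm : differential F b m ≠ 0)
    (hem : differential F e m ≠ 0) (heB : InSpan F B e) {x y w : K}
    (hz : eval (x • a + (y • b + w • e)) F = 0) : InSpan F B (x • a + (y • b + w • e)) := by
  have hbB : InSpan F B b := h.inSpan_vertex hK hF ham hbm hem heB
  have haB : InSpan F B a :=
    ((h.reverse hF).rotate hF).inSpan_vertex hK hF hbm ham hem heB
  have side {a b e : Fin n → K} (h : IsTriangle F a b e) (haB : InSpan F B a)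
      (hbB : InSpan F B b) (heB : InSpan F B e) (x y : K) : InSpan F B (x • a + y • b) := by
    rcases eq_or_ne x 0 with rfl | hx
    · simpa using hbB.smul y
    rcases eq_or_ne y 0 with rfl | hy
    · simpa using haB.smul x
    exact h.inSpan_side hF heB hx hy
  rw [h.eval_eq hF, mul_eq_zero, or_iff_left h.polarization_ne_zero, mul_eq_zero,
    mul_eq_zero] at hz
  rcases hz with (rfl | rfl) | rfl
  · simpa using side (h.rotate hF) hbB heB haB y w
  · simpa using side ((h.rotate hF).reverse hF) haB heB hbB x w
  · simpa using side h haB hbB heB x y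

lemma exists_isTriangle_of_differential_eq_zero (hF : F.IsHomogeneous 3) (hW : LineOnSurf F W)
    (hr : r ∈ W) (hq : q ∈ W) (hrv : differential F r v = 0) (hqv : differential F q v = 0)
    (hT : polarization F v r q ≠ 0) (hdisc : residualDisc F v r q = 0) :
    ∃ α β : K, IsTriangle F (v + (α • r + β • q)) r q := by
  have hv : eval v F * polarization F v r q = differential F v q * differential F v r := by
    rw [residualDisc, conicDisc, hrv, hqv] at hdisc
    refine mul_right_cancel₀ hT ?_
    linear_combination -hdisc
  obtain ⟨α, hα⟩ : ∃ α, polarization F v r q * α = -differential F v q := ⟨_, mul_div_cancel₀ _ hT⟩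
  obtain ⟨β, hβ⟩ : ∃ β, polarization F v r q * β = -differential F v r := ⟨_, mul_div_cancel₀ _ hT⟩
  have hu : α • r + β • q ∈ W := W.add_mem (W.smul_mem α hr) (W.smul_mem β hq)
  have hra : differential F r (v + (α • r + β • q)) = 0 := by
    rw [map_add, hrv, hW.differential_eq_zero hF hr hu, add_zero]
  have hqa : differential F q (v + (α • r + β • q)) = 0 := by
    rw [map_add, hqv, hW.differential_eq_zero hF hq hu, add_zero]
  have har : differential F (v + (α • r + β • q)) r = 0 := by
    rw [differential_add_left, hW.differential_eq_zero hF hu hr, polarization_add_mid hF,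
      polarization_smul_mid hF, polarization_self_right hF, hrv, polarization_smul_mid hF,
      polarization_right_comm hF v q r]
    linear_combination hβ
  have haq : differential F (v + (α • r + β • q)) q = 0 := by
    rw [differential_add_left, hW.differential_eq_zero hF hu hq, polarization_add_mid hF,
      polarization_smul_mid hF, polarization_smul_mid hF, polarization_self_right hF, hqv]
    linear_combination hα
  have haF : eval (v + (α • r + β • q)) F = 0 := by
    have h := eval_plane hF hW hr hq (v := v) 1 α β
    rw [one_smul, hrv, hqv] at h
    refine mul_left_cancel₀ hT ?_
    rw [h]
    linear_combination hv + β * polarization F v r q * hα + differential F v r * hα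
  refine ⟨α, β, lineOnSurf_span_pair hF haF (hW.eval_eq_zero hr) har hra,
    lineOnSurf_span_pair hF (hW.eval_eq_zero hr) (hW.eval_eq_zero hq)
      (hW.differential_eq_zero hF hr hq) (hW.differential_eq_zero hF hq hr),
    lineOnSurf_span_pair hF (hW.eval_eq_zero hq) haF hqa haq, ?_⟩
  rwa [polarization_add_left hF, hW.polarization_eq_zero hF hu hr hq, add_zero]

lemma exists_isTriangle (hF : F.IsHomogeneous 3) (hW : LineOnSurf F W) (hr : r ∈ W) (hq : q ∈ W)
    (hqv : differential F q v = 0) (hT : polarization F v r q ≠ 0)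
    (hdisc : residualDisc F v r q = 0) :
    ∃ α β γ : K, IsTriangle F (v + (α • r + β • q)) (r + γ • q) q := by
  obtain ⟨γ, hγ⟩ : ∃ γ, polarization F v r q * γ = -differential F r v := ⟨_, mul_div_cancel₀ _ hT⟩
  have hrv : differential F (r + γ • q) v = 0 := by
    rw [differential_add_left, differential_smul_left hF, hqv, polarization_smul_mid hF,
      ← polarization_rotate hF v r q]
    linear_combination hγ
  have hT' : polarization F v (r + γ • q) q ≠ 0 := by
    rwa [polarization_add_mid hF, polarization_smul_mid hF,
      polarization_self_right hF, hqv, mul_zero, mul_zero, add_zero]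
  have hdisc' : residualDisc F v (r + γ • q) q = 0 := by
    simpa [hdisc] using residualDisc_basis_change hF 1 γ 0 1 v r q
  obtain ⟨α, β, h⟩ := exists_isTriangle_of_differential_eq_zero hF hW
    (W.add_mem hr (W.smul_mem γ hq)) hq hrv hqv hT' hdisc'
  refine ⟨α, α * γ + β, γ, ?_⟩
  convert h using 2
  module

end Triangle

/-! ### Smoothness and tangent frames -/

section Nonsingular

variable {K L : Type*} [Field K] [Field L] {n : ℕ} {F : MvPolynomial (Fin n) K}

/-- The Jacobian criterion at the points over the base field only; `IsSmoothHypersurf F` is this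
condition for `clF F`. -/
def IsNonsingular (F : MvPolynomial (Fin n) K) : Prop :=
  ∀ z : Fin n → K, eval z F = 0 → (∀ i, eval z (pderiv i F) = 0) → z = 0

lemma IsNonsingular.of_map (φ : K →+* L) (h : IsNonsingular (map φ F)) : IsNonsingular F := by
  intro z hz hdz
  by_contra hz0
  refine clVec_ne_zero φ hz0 (h _ ?_ fun i => ?_)
  · rw [clVec_eval, hz, map_zero]
  · rw [pderiv_map, clVec_eval, hdz, map_zero]

lemma IsNonsingular.differential_ne_zero (h : IsNonsingular F) {z : Fin n → K} (hz0 : z ≠ 0)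
    (hz : eval z F = 0) : differential F z ≠ 0 := by
  intro hd
  refine hz0 (h z hz fun i => ?_)
  simpa [differential_apply, Pi.single_apply] using congrArg (· (Pi.single i 1)) hd

lemma IsNonsingular.differential_ne_zero_of_frame (h : IsNonsingular F) {m a b e : Fin n → K}
    (hframe : Submodule.span K {m, a, b, e} = ⊤) {z : Fin n → K} (hz0 : z ≠ 0)
    (hz : eval z F = 0) (ha : differential F z a = 0) (hb : differential F z b = 0)
    (he : differential F z e = 0) : differential F z m ≠ 0 := by
  intro hm
  refine h.differential_ne_zero hz0 hz (LinearMap.ext_on hframe ?_)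
  rintro _ (rfl | rfl | rfl | rfl) <;> simpa

lemma span_eq_top_of_subset {s t : Set (Fin n → K)} (hs : Submodule.span K s = ⊤)
    (hst : s ⊆ Submodule.span K t) : Submodule.span K t = ⊤ :=
  eq_top_iff.mpr (hs ▸ Submodule.span_le.mpr hst)

lemma span_clVec_image_eq_top (φ : K →+* L) {s : Set (Fin n → K)}
    (hs : Submodule.span K s = ⊤) : Submodule.span L (clVec φ '' s) = ⊤ := by
  have hclVec (u : Fin n → K) : clVec φ u ∈ Submodule.span L (clVec φ '' s) := by
    have hu : u ∈ Submodule.span K s := hs ▸ Submodule.mem_top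
    induction hu using Submodule.span_induction with
    | mem x hx => exact Submodule.subset_span ⟨x, hx, rfl⟩
    | zero => simp [show clVec φ (0 : Fin n → K) = 0 from funext fun _ => map_zero φ]
    | add x y _ _ hx hy =>
      rw [show clVec φ (x + y) = clVec φ x + clVec φ y from funext fun _ => map_add φ _ _]
      exact Submodule.add_mem _ hx hy
    | smul a x _ hx =>
      rw [show clVec φ (a • x) = φ a • clVec φ x from funext fun _ => map_mul φ _ _]
      exact Submodule.smul_mem _ _ hx
  have hsingle (i : Fin n) : clVec φ (Pi.single i 1) = Pi.single i 1 :=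
    funext fun j => by simp [clVec, Pi.single_apply, apply_ite φ]
  refine Submodule.eq_top_iff'.mpr fun w => ?_
  rw [pi_eq_sum_univ' w]
  exact Submodule.sum_mem _ fun i _ => Submodule.smul_mem _ _ (hsingle i ▸ hclVec (Pi.single i 1))

end Nonsingular

section TangentFrame

variable {K : Type*} [Field K]

lemma exists_frame_of_le_ker {W : Submodule K (Fin 4 → K)} (hW : IsLine W) {q : Fin 4 → K}
    (hq : q ∈ W) (hq0 : q ≠ 0) {D : (Fin 4 → K) →ₗ[K] K} (hD : D ≠ 0)
    (hWD : W ≤ LinearMap.ker D) :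
    ∃ r ∈ W, ∃ v m : Fin 4 → K, D v = 0 ∧ LinearIndependent K ![r, q] ∧
      Submodule.span K {m, v, r, q} = ⊤ := by
  obtain ⟨m, hm⟩ : ∃ m, D m ≠ 0 := by simpa using DFunLike.ne_iff.mp hD
  obtain ⟨r, hr, hrq⟩ : ∃ r ∈ W, r ∉ Submodule.span K {q} := by
    by_contra! h
    have hle := (Submodule.finrank_mono (show W ≤ Submodule.span K {q} from h)).trans_eq
      (finrank_span_singleton hq0)
    rw [hW] at hle
    omega
  obtain ⟨v, hv, hvW⟩ : ∃ v ∈ LinearMap.ker D, v ∉ W := by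
    by_contra! h
    have hker := Module.Dual.finrank_ker_add_one_of_ne_zero hD
    have hle := Submodule.finrank_mono (show LinearMap.ker D ≤ W from h)
    rw [hW] at hle
    simp only [Module.finrank_fin_fun] at hker
    omega
  have hrqLI : LinearIndependent K ![r, q] :=
    linearIndependent_finCons.mpr ⟨by simpa using hq0, by simpa using hrq⟩
  have hspan : Submodule.span K (Set.range ![r, q]) ≤ W :=
    Submodule.span_le.mpr (by rintro _ ⟨i, rfl⟩; fin_cases i; exacts [hr, hq])
  have hvrq : LinearIndependent K ![v, r, q] :=
    linearIndependent_finCons.mpr ⟨hrqLI, fun h => hvW (hspan h)⟩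
  have hspan' : Submodule.span K (Set.range ![v, r, q]) ≤ LinearMap.ker D :=
    Submodule.span_le.mpr (by rintro _ ⟨i, rfl⟩; fin_cases i; exacts [hv, hWD hr, hWD hq])
  have hmvrq : LinearIndependent K ![m, v, r, q] :=
    linearIndependent_finCons.mpr ⟨hvrq, fun h => hm (hspan' h)⟩
  have htop := hmvrq.span_eq_top_of_card_eq_finrank (by simp)
  refine ⟨r, hr, v, m, hv, hrqLI, ?_⟩
  simpa only [Matrix.range_cons, Matrix.range_empty, Set.union_empty, Set.singleton_union]
    using htop

lemma exists_eq_of_mem_ker {n : ℕ} {D : (Fin n → K) →ₗ[K] K} {m v r q z : Fin n → K}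
    (hframe : Submodule.span K {m, v, r, q} = ⊤) (hm : D m ≠ 0) (hv : D v = 0) (hr : D r = 0)
    (hq : D q = 0) (hz : D z = 0) : ∃ x y w : K, x • v + (y • r + w • q) = z := by
  obtain ⟨t, _, hz', rfl⟩ := Submodule.mem_span_insert.mp (hframe ▸ Submodule.mem_top : z ∈ _)
  obtain ⟨x, y, w, rfl⟩ := Submodule.mem_span_triple.mp hz'
  have ht : t = 0 := by simpa [hv, hr, hq, hm] using hz
  exact ⟨x, y, w, by rw [ht, zero_smul, zero_add, add_assoc]⟩

end TangentFrame

/-! ### Eckardt points -/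

section Eckardt

lemma onLine_mk_iff {K : Type*} [Field K] {n : ℕ} {W : Submodule K (Fin n → K)}
    {v : Fin n → K} (hv : v ≠ 0) : OnLine W (Projectivization.mk K v hv) ↔ v ∈ W := by
  obtain ⟨a, ha⟩ := Projectivization.exists_smul_eq_mk_rep K v hv
  rw [OnLine, ← ha]
  exact Submodule.smul_mem_iff' W a

section ConicRoots

variable {K : Type*} [Field K] {n : ℕ} {F : MvPolynomial (Fin n) K}
  {W : Submodule K (Fin n → K)} {v r q : Fin n → K}

lemma lineOnSurf_span_of_conic_root (hF : F.IsHomogeneous 3) (hW : LineOnSurf F W) (hr : r ∈ W)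
    (hq : q ∈ W) (hqv : differential F q v = 0) (hvq : differential F v q = 0)
    (hT : polarization F v r q = 0) {s : K}
    (hs : differential F r v * s ^ 2 + differential F v r * s + eval v F = 0) :
    LineOnSurf F (Submodule.span K {v + s • r, q}) := by
  refine lineOnSurf_span_pair hF ?_ (hW.eval_eq_zero hq) ?_ ?_
  · have h := eval_plane hF hW hr hq (v := v) 1 s 0
    rw [one_smul, zero_smul, add_zero] at h
    rw [h]
    linear_combination hs
  · rw [differential_add_left, differential_smul_left hF, polarization_smul_mid hF, hvq, hT,
      hW.differential_eq_zero hF hr hq]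
    ring
  · rw [map_add, map_smul, hqv, hW.differential_eq_zero hF hq hr, smul_zero, add_zero]

lemma eckardtAt_of_conic_roots (hF : F.IsHomogeneous 3) (hWl : IsLine W) (hW : LineOnSurf F W)
    (hr : r ∈ W) (hq : q ∈ W) (hqv : differential F q v = 0) (hvq : differential F v q = 0)
    (hT : polarization F v r q = 0) (hrv : differential F r v ≠ 0) {s s' : K}
    (hs : differential F r v * s ^ 2 + differential F v r * s + eval v F = 0)
    (hs' : differential F r v * s' ^ 2 + differential F v r * s' + eval v F = 0) (hne : s ≠ s')
    (hq0 : q ≠ 0) : EckardtAt F (Projectivization.mk K q hq0) := by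
  have hrz (t : K) : differential F r (v + t • r) ≠ 0 := by
    rwa [map_add, map_smul, hW.differential_eq_zero hF hr hr, smul_zero, add_zero]
  have hz (t : K) : v + t • r ∈ Submodule.span K {v + t • r, q} := Submodule.subset_span (by simp)
  have hline (t : K) : IsLine (Submodule.span K {v + t • r, q}) :=
    isLine_span_pair (LinearIndependent.pair_symm_iff.mp <|
      linearIndependent_pair_of_map_ne_zero hq0 (hW.differential_eq_zero hF hr hq) (hrz t))
  have hWne (t : K) : W ≠ Submodule.span K {v + t • r, q} := fun h =>
    hrz t (hW.differential_eq_zero hF hr (h ▸ hz t))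
  have hS := lineOnSurf_span_of_conic_root hF hW hr hq hqv hvq hT hs
  have hS' := lineOnSurf_span_of_conic_root hF hW hr hq hqv hvq hT hs'
  refine ⟨W, _, _, hWne s, hWne s', fun h => ?_, ?_⟩
  · have hsub : (s - s') • r ∈ Submodule.span K {v + s • r, q} := by
      convert Submodule.sub_mem _ (hz s) (h ▸ hz s') using 1
      module
    have hr' := (Submodule.smul_mem_iff _ (sub_ne_zero.mpr hne)).mp hsub
    exact hrz s (hS.differential_eq_zero hF hr' (hz s))
  · rintro _ (rfl | rfl | rfl)
    · exact ⟨hWl, hW, (onLine_mk_iff hq0).mpr hq⟩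
    · exact ⟨hline s, hS, (onLine_mk_iff hq0).mpr (Submodule.subset_span (by simp))⟩
    · exact ⟨hline s', hS', (onLine_mk_iff hq0).mpr (Submodule.subset_span (by simp))⟩

end ConicRoots

section AlgClosed

variable {L : Type*} [Field L] [IsAlgClosed L] {n : ℕ} {F : MvPolynomial (Fin n) L}
  {W : Submodule L (Fin n → L)} {m v r q : Fin n → L}

/-- Otherwise the plane spanned by `v`, `r`, `q` is tangent along the whole line, and the surface is
singular at a zero `r + t q` of the quadratic form `z ↦ D z m` on the line. -/
lemma polarization_ne_zero_of_differential_eq_zero (hF : F.IsHomogeneous 3)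
    (hN : IsNonsingular F) (hW : LineOnSurf F W) (hr : r ∈ W) (hq : q ∈ W)
    (hrq : LinearIndependent L ![r, q]) (hframe : Submodule.span L {m, v, r, q} = ⊤)
    (hrv : differential F r v = 0) (hqv : differential F q v = 0) :
    polarization F v r q ≠ 0 := by
  intro hT
  have hq0 : q ≠ 0 := hrq.ne_zero 1
  have hqm : differential F q m ≠ 0 := hN.differential_ne_zero_of_frame hframe hq0
    (hW.eval_eq_zero hq) hqv (hW.differential_eq_zero hF hq hr) (hW.differential_eq_zero hF hq hq)
  obtain ⟨t, ht⟩ := IsAlgClosed.exists_root (Polynomial.C (differential F q m) * Polynomial.X ^ 2 +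
    Polynomial.C (polarization F r q m) * Polynomial.X + Polynomial.C (differential F r m))
    (by rw [Polynomial.degree_quadratic hqm]; decide)
  have hz : r + t • q ∈ W := W.add_mem hr (W.smul_mem t hq)
  refine hN.differential_ne_zero_of_frame hframe (z := r + t • q) ?_ (hW.eval_eq_zero hz) ?_
    (hW.differential_eq_zero hF hz hr) (hW.differential_eq_zero hF hz hq) ?_
  · intro h0
    exact one_ne_zero (LinearIndependent.pair_iff.mp hrq 1 t (by rwa [one_smul])).1
  · rw [differential_add_left, differential_smul_left hF, polarization_smul_mid hF, hrv, hqv,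
      ← polarization_rotate hF v r q, hT, mul_zero, mul_zero, add_zero, add_zero]
  · rw [differential_add_left, differential_smul_left hF, polarization_smul_mid hF]
    simp only [Polynomial.IsRoot, Polynomial.eval_add, Polynomial.eval_mul, Polynomial.eval_pow,
      Polynomial.eval_C, Polynomial.eval_X] at ht
    linear_combination ht

/-- A root `s` of the quadratic gives the line through `q` and `v + s r`. If the conic were a double
line, `polarization_ne_zero_of_differential_eq_zero` would apply to that line, with `r` in place
of `v`. -/
lemma two_mul_add_ne_zero_of_conic_root (hF : F.IsHomogeneous 3)
    (hN : IsNonsingular F) (hW : LineOnSurf F W) (hr : r ∈ W) (hq : q ∈ W)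
    (hq0 : q ≠ 0) (hframe : Submodule.span L {m, v, r, q} = ⊤)
    (hrv : differential F r v ≠ 0) (hqv : differential F q v = 0) (hvq : differential F v q = 0)
    (hT : polarization F v r q = 0) {s : L}
    (hs : differential F r v * s ^ 2 + differential F v r * s + eval v F = 0) :
    2 * differential F r v * s + differential F v r ≠ 0 := by
  intro h0
  set z := v + s • r with hz
  have hrz : differential F r z = differential F r v := by
    rw [hz, map_add, map_smul, hW.differential_eq_zero hF hr hr, smul_zero, add_zero]
  have hLI : LinearIndependent L ![z, q] := LinearIndependent.pair_symm_iff.mp <|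
    linearIndependent_pair_of_map_ne_zero hq0 (hW.differential_eq_zero hF hr hq) (hrz ▸ hrv)
  refine polarization_ne_zero_of_differential_eq_zero (m := m) (v := r) hF hN
    (lineOnSurf_span_of_conic_root hF hW hr hq hqv hvq hT hs)
    (Submodule.subset_span (by simp [hz])) (Submodule.subset_span (by simp)) hLI ?_ ?_
    (hW.differential_eq_zero hF hq hr) ?_
  · have hz' : z ∈ Submodule.span L {m, r, z, q} := Submodule.subset_span (by simp)
    have hr' : r ∈ Submodule.span L {m, r, z, q} := Submodule.subset_span (by simp)
    have hv' : v ∈ Submodule.span L {m, r, z, q} := by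
      simpa [hz] using Submodule.sub_mem _ hz' (Submodule.smul_mem _ s hr')
    refine span_eq_top_of_subset hframe ?_
    simp only [Set.insert_subset_iff, Set.singleton_subset_iff, SetLike.mem_coe]
    exact ⟨Submodule.subset_span (by simp), hv', hr', Submodule.subset_span (by simp)⟩
  · rw [hz, differential_add_left, differential_smul_left hF, polarization_smul_mid hF,
      hW.differential_eq_zero hF hr hr, polarization_self_right hF]
    linear_combination h0
  · rw [hz, polarization_add_mid hF, polarization_smul_mid hF, polarization_comm, hT,
      hW.polarization_eq_zero hF hr hr hq, mul_zero, add_zero]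

lemma eckardtAt_of_residualDisc_eq_zero (hF : F.IsHomogeneous 3)
    (hN : IsNonsingular F) (hWl : IsLine W) (hW : LineOnSurf F W) (hr : r ∈ W) (hq : q ∈ W)
    (hrq : LinearIndependent L ![r, q]) (hframe : Submodule.span L {m, v, r, q} = ⊤)
    (hqv : differential F q v = 0) (hT : polarization F v r q = 0)
    (hdisc : residualDisc F v r q = 0) (hq0 : q ≠ 0) :
    EckardtAt F (Projectivization.mk L q hq0) := by
  have hrv : differential F r v ≠ 0 := fun hrv =>
    polarization_ne_zero_of_differential_eq_zero hF hN hW hr hq hrq hframe hrv hqv hT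
  have hvq : differential F v q = 0 := by
    simpa [residualDisc, conicDisc, hT, hqv, hrv] using hdisc
  obtain ⟨s, hs⟩ := IsAlgClosed.exists_root (Polynomial.C (differential F r v) * Polynomial.X ^ 2 +
    Polynomial.C (differential F v r) * Polynomial.X + Polynomial.C (eval v F))
    (by rw [Polynomial.degree_quadratic hrv]; decide)
  simp only [Polynomial.IsRoot, Polynomial.eval_add, Polynomial.eval_mul, Polynomial.eval_pow,
    Polynomial.eval_C, Polynomial.eval_X] at hs
  obtain ⟨s', hss'⟩ : ∃ s', differential F r v * (s + s') = -differential F v r :=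
    ⟨-differential F v r / differential F r v - s, by field_simp; ring⟩
  refine eckardtAt_of_conic_roots hF hWl hW hr hq hqv hvq hT hrv hs
    (s' := s') (by linear_combination hs + (s' - s) * hss') ?_ hq0
  rintro rfl
  refine two_mul_add_ne_zero_of_conic_root hF hN hW hr hq hq0 hframe hrv hqv hvq hT hs ?_
  linear_combination hss'

end AlgClosed

section BaseField

variable {K : Type*} [Field K] {n : ℕ} {F : MvPolynomial (Fin n) K}
  {W : Submodule K (Fin n → K)} {m v r : Fin n → K} {P : Projectivization K (Fin n → K)}

lemma polarization_ne_zero_of_not_isEckardt (hF : F.IsHomogeneous 3) (hN : IsSmoothHypersurf F)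
    (hW : LineOnSurf F W) (hr : r ∈ W) (hP : P.rep ∈ W)
    (hrP : LinearIndependent K ![r, P.rep])
    (hframe : Submodule.span K {m, v, r, P.rep} = ⊤) (hPv : differential F P.rep v = 0)
    (hdisc : residualDisc F v r P.rep = 0) (hPE : ¬ IsEckardt F P) :
    polarization F v r P.rep ≠ 0 := by
  intro hT
  let φ := algebraMap K (AlgebraicClosure K)
  have hF' : (clF F).IsHomogeneous 3 := hF.map φ
  have hLI : LinearIndependent (AlgebraicClosure K) ![clVec φ r, clVec φ P.rep] := by
    have hvec : (fun i => φ ∘ ![r, P.rep] i) = ![clVec φ r, clVec φ P.rep] := by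
      funext i
      fin_cases i <;> rfl
    exact hvec ▸ linearIndependent_algebraMap_comp_iff.mpr hrP
  have heval {u : Fin n → K} (hu : u ∈ W) : eval (clVec φ u) (clF F) = 0 := by
    rw [clF, clVec_eval, hW.eval_eq_zero hu, map_zero]
  have hdiff {u u' : Fin n → K} (hu : u ∈ W) (hu' : u' ∈ W) :
      differential (clF F) (clVec φ u) (clVec φ u') = 0 :=
    (differential_map φ F u u').trans (by rw [hW.differential_eq_zero hF hu hu', map_zero])
  refine hPE (eckardtAt_of_residualDisc_eq_zero (m := clVec φ m) (v := clVec φ v) (r := clVec φ r)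
    hF' hN (isLine_span_pair hLI)
    (lineOnSurf_span_pair hF' (heval hr) (heval hP) (hdiff hr hP) (hdiff hP hr))
    (Submodule.subset_span (by simp)) (Submodule.subset_span (by simp)) hLI ?_ ?_ ?_ ?_ _)
  · simpa only [Set.image_insert_eq, Set.image_singleton] using span_clVec_image_eq_top φ hframe
  · exact (differential_map φ F _ _).trans (by rw [hPv, map_zero])
  · exact (polarization_map φ F _ _ _).trans (by rw [hT, map_zero])
  · exact (residualDisc_map φ F _ _ _).trans (by rw [hdisc, map_zero])

end BaseField

end Eckardt

/-! ### Points of the tangent section -/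

section TangentSection

variable {K : Type*} [Field K] {n : ℕ} {F : MvPolynomial (Fin n) K}
  {W : Submodule K (Fin n → K)} {B : Set (Projectivization K (Fin n → K))}
  {m v r q a b e : Fin n → K}

lemma IsTriangle.ne_zero (hF : F.IsHomogeneous 3) (h : IsTriangle F a b e) : a ≠ 0 := by
  rintro rfl
  refine h.polarization_ne_zero ?_
  simpa using polarization_smul_left hF 0 0 b e

lemma IsTriangle.differential_ne_zero (hF : F.IsHomogeneous 3) (hN : IsNonsingular F)
    (h : IsTriangle F a b e) (hframe : Submodule.span K {m, a, b, e} = ⊤) :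
    differential F a m ≠ 0 := by
  have hea := (h.rotate hF).rotate hF
  refine hN.differential_ne_zero_of_frame hframe (h.ne_zero hF) h.eval_eq_zero ?_
    (h.differential_eq_zero hF) (hea.differential_eq_zero' hF)
  rw [differential_self hF, h.eval_eq_zero, mul_zero]

lemma IsTriangle.inSpan_of_frame (hK : 11 < Cardinal.mk K) (hF : F.IsHomogeneous 3)
    (hN : IsNonsingular F) (h : IsTriangle F a b e)
    (hframe : Submodule.span K {m, a, b, e} = ⊤) (heB : InSpan F B e) {x y w : K}
    (hz : eval (x • a + (y • b + w • e)) F = 0) : InSpan F B (x • a + (y • b + w • e)) := by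
  have hrotate {a b e : Fin n → K} (h : Submodule.span K {m, a, b, e} = ⊤) :
      Submodule.span K {m, b, e, a} = ⊤ :=
    span_eq_top_of_subset h (by grind [Submodule.subset_span])
  exact h.inSpan_of_mem_plane hK hF (h.differential_ne_zero hF hN hframe)
    ((h.rotate hF).differential_ne_zero hF hN (hrotate hframe))
    (((h.rotate hF).rotate hF).differential_ne_zero hF hN (hrotate (hrotate hframe))) heB hz

lemma InSpan.of_singular_conic (hK : 11 < Cardinal.mk K) (hF : F.IsHomogeneous 3)
    (hN : IsNonsingular F) (hW : LineOnSurf F W) (hr : r ∈ W) (hq : q ∈ W)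
    (hframe : Submodule.span K {m, v, r, q} = ⊤) (hqv : differential F q v = 0)
    (hT : polarization F v r q ≠ 0) (hdisc : residualDisc F v r q = 0) (hqB : InSpan F B q)
    {x y w : K} (hz : eval (x • v + (y • r + w • q)) F = 0) :
    InSpan F B (x • v + (y • r + w • q)) := by
  obtain ⟨α, β, γ, h⟩ := exists_isTriangle hF hW hr hq hqv hT hdisc
  set a := v + (α • r + β • q) with ha
  set b := r + γ • q with hb
  have hframe' : Submodule.span K {m, a, b, q} = ⊤ := by
    have ha' : a ∈ Submodule.span K {m, a, b, q} := Submodule.subset_span (by simp)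
    have hb' : b ∈ Submodule.span K {m, a, b, q} := Submodule.subset_span (by simp)
    have hq' : q ∈ Submodule.span K {m, a, b, q} := Submodule.subset_span (by simp)
    have hr' : r ∈ Submodule.span K {m, a, b, q} := by
      simpa [hb] using Submodule.sub_mem _ hb' (Submodule.smul_mem _ γ hq')
    have hv' : v ∈ Submodule.span K {m, a, b, q} := by
      simpa [ha] using Submodule.sub_mem _ ha'
        (Submodule.add_mem _ (Submodule.smul_mem _ α hr') (Submodule.smul_mem _ β hq'))
    refine span_eq_top_of_subset hframe ?_
    simp only [Set.insert_subset_iff, Set.singleton_subset_iff, SetLike.mem_coe]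
    exact ⟨Submodule.subset_span (by simp), hv', hr', hq'⟩
  have hexpand : x • v + (y • r + w • q) =
      x • a + ((y - x * α) • b + (w - x * β - (y - x * α) * γ) • q) := by
    rw [ha, hb]
    module
  rw [hexpand] at hz ⊢
  exact h.inSpan_of_frame hK hF hN hframe' hqB hz

lemma InSpan.of_smooth_conic (hK : 11 < Cardinal.mk K) (hF : F.IsHomogeneous 3)
    (hN : IsNonsingular F) (hW : LineOnSurf F W) (hr : r ∈ W) (hq : q ∈ W) (hq0 : q ≠ 0)
    (hframe : Submodule.span K {m, v, r, q} = ⊤) (hqv : differential F q v = 0)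
    (hdisc : residualDisc F v r q ≠ 0) (hqB : InSpan F B q)
    {x y w : K} (hz : eval (x • v + (y • r + w • q)) F = 0) :
    InSpan F B (x • v + (y • r + w • q)) :=
  hqB.of_mem_plane_of_smooth_conic hK hF hW hr hq hqv
    (fun _ hu hu0 huv => hN.differential_ne_zero_of_frame hframe hu0 (hW.eval_eq_zero hu) huv
      (hW.differential_eq_zero hF hu hr) (hW.differential_eq_zero hF hu hq)) hq0 hdisc hz

lemma mem_gammaPts_iff {P Q : Projectivization K (Fin n → K)} :
    Q ∈ GammaPts F P ↔ eval Q.rep F = 0 ∧ differential F P.rep Q.rep = 0 := by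
  rw [differential_apply]
  rfl

lemma LineOnSurf.linePts_subset_gammaPts (hF : F.IsHomogeneous 3) (hW : LineOnSurf F W)
    {P : Projectivization K (Fin n → K)} (hP : OnLine W P) : linePts W ⊆ GammaPts F P :=
  fun _ hQ => mem_gammaPts_iff.mpr ⟨hW.eval_eq_zero hQ, hW.differential_eq_zero hF hP hQ⟩

end TangentSection

end CubicSurf

open CubicSurf MvPolynomial in
/-- Let `K` be a field with at least 13 elements, `S` a smooth cubic
surface over `K`, `ℓ` a `K`-line contained in `S`, and `P ∈ ℓ(K)` a point that is not an
Eckardt point. Then `ℓ(K) ⊆ Γ_P(K) ⊆ Span({P})`. -/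
theorem line_points_spanned_by_non_eckardt_point
    {K : Type*} [Field K] (hK : 13 ≤ Cardinal.mk K)
    (F : MvPolynomial (Fin 4) K) (hF : SmoothCubic F)
    (W : Submodule K (Fin 4 → K)) (hl : IsLine W) (hS : LineOnSurf F W)
    (P : Projectivization K (Fin 4 → K)) (hPW : OnLine W P) (hPS : P ∈ zeroSet F)
    (hPE : ¬ IsEckardt F P) :
    linePts W ⊆ GammaPts F P ∧ GammaPts F P ⊆ Span F {P} := by
  obtain ⟨hF3, hsmooth⟩ := hF
  have hN : IsNonsingular F := IsNonsingular.of_map _ hsmooth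
  have hK' : 11 < Cardinal.mk K := lt_of_lt_of_le (by norm_num) hK
  have hPB : InSpan F {P} P.rep := inSpan_rep_iff.mpr (SpanMem.base P rfl)
  have hD := hN.differential_ne_zero P.rep_nonzero hPS
  have hWD {u} (hu : u ∈ W) : differential F P.rep u = 0 := hS.differential_eq_zero hF3 hPW hu
  refine ⟨hS.linePts_subset_gammaPts hF3 hPW, fun Q hQ => inSpan_rep_iff.mp ?_⟩
  obtain ⟨r, hr, v, m, hv, hrP, hframe⟩ :=
    exists_frame_of_le_ker hl hPW P.rep_nonzero hD (fun _ => hWD)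
  have hm : differential F P.rep m ≠ 0 := hN.differential_ne_zero_of_frame hframe P.rep_nonzero
    hPS hv (hWD hr) (hWD hPW)
  obtain ⟨hQF, hPQ⟩ := mem_gammaPts_iff.mp hQ
  obtain ⟨x, y, w, hxyw⟩ := exists_eq_of_mem_ker hframe hm hv (hWD hr) (hWD hPW) hPQ
  rw [← hxyw] at hQF ⊢
  by_cases hdisc : residualDisc F v r P.rep = 0
  · have hT := polarization_ne_zero_of_not_isEckardt hF3 hsmooth hS hr hPW hrP hframe hv hdisc hPE
    exact hPB.of_singular_conic hK' hF3 hN hS hr hPW hframe hv hT hdisc hQF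
  · exact hPB.of_smooth_conic hK' hF3 hN hS hr hPW P.rep_nonzero hframe hv hdisc hQF
end
end

section
/- Let K be a field with at least 13 elements and S a smooth cubic surface in P^3 over K. Suppose S contains two skew K-lines ℓ and ℓ'. Then ℓ'(K) ⊆ Span(ℓ(K)). -/
/- Common framework: points, lines, intersection divisors, the secant-tangent span,
the groups `H_S(K)`, geometric notions over the algebraic closure, and topologies. -/

open MvPolynomial

noncomputable section

/-! In coordinates `x`, `y` on the two skew lines `y = 0` and `x = 0`, the surface has the equation
`α(x) ∧ y + β(y) ∧ x = 0`, where the binary quadratic maps `α` and `β` are the Gauss maps of the two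
lines; smoothness along the lines makes them base point free. The chord joining `x` to `y = α(x)` is
tangent to the surface at `x`, so `y` is spanned unless `β(y) = x`, in which case the other point of
the fibre `α⁻¹(y)` can be used if there is one.

Let the point `z` of the line `x = 0` be spanned, and let `y` be a point of this line with
`β(y) ≠ β(z)`. The third point of the chord through `β(z)` and `y` lies in the tangent plane at `z`,
so the line joining it to `z` is tangent at `z`. Hence this third point is spanned unless a certain
quintic `θ` vanishes at `z`, and then so is `y`. Counting degrees gives a first spanned point `z`
outside the zeros of `θ`, and an intermediate point `w`, also outside these zeros, with
`β(w) ≠ β(z)` and `β(w) ≠ β(y)`. The degree count for `z` is too weak only if `α` is inseparable;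
then the characteristic is two, and a field with at least 13 elements has at least 16. -/

namespace SkewLines
open CubicSurf

section QuadraticMaps

variable {R S : Type*} [CommRing R] [CommRing S]

/-- The `2 × 2` determinant `u ∧ v`. -/
def wedge (u v : Fin 2 → R) : R := u 0 * v 1 - u 1 * v 0

/-- The binary quadratic map `R² → R²` whose two components have the rows of `a` as their
coefficients with respect to `x₀², x₀x₁, x₁²`. -/
def quadMap (a : Matrix (Fin 2) (Fin 3) R) (x : Fin 2 → R) : Fin 2 → R :=
  a.mulVec ![x 0 ^ 2, x 0 * x 1, x 1 ^ 2]

/-- The `2 × 2` minor of `a` on the columns `i` and `j`. -/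
def minor (a : Matrix (Fin 2) (Fin 3) R) (i j : Fin 3) : R := a 0 i * a 1 j - a 0 j * a 1 i

/-- The Bezoutian of the two components of `quadMap a`, a symmetric bilinear form. -/
def bezoutian (a : Matrix (Fin 2) (Fin 3) R) (u v : Fin 2 → R) : R :=
  minor a 0 1 * (u 0 * v 0) + minor a 0 2 * (u 0 * v 1 + u 1 * v 0) + minor a 1 2 * (u 1 * v 1)

/-- A spanning vector of the orthogonal complement of `x` for the Bezoutian. Geometrically it is
the other point of the fibre of `quadMap a` through `x`. -/
def conjugate (a : Matrix (Fin 2) (Fin 3) R) (x : Fin 2 → R) : Fin 2 → R :=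
  ![-(minor a 0 2 * x 0 + minor a 1 2 * x 1), minor a 0 1 * x 0 + minor a 0 2 * x 1]

/-- The equation of the skew cubic surface with Gauss maps `quadMap a` and `quadMap b`, in the
coordinates `x` and `y` of two skew lines `y = 0` and `x = 0` on it. -/
def skewForm (a b : Matrix (Fin 2) (Fin 3) R) (x y : Fin 2 → R) : R :=
  wedge (quadMap a x) y + wedge (quadMap b y) x

/-- The binary quintic whose zeros are the points `z` of the line `x = 0` such that the conic
residual to this line in the tangent plane at `z` contains a line through `z` other than the one
joining `z` to `quadMap b z`. -/
def theta (a b : Matrix (Fin 2) (Fin 3) R) (z : Fin 2 → R) : R :=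
  bezoutian b (quadMap a (quadMap b z)) z

lemma wedge_self (u : Fin 2 → R) : wedge u u = 0 := by
  unfold wedge; ring

lemma wedge_swap (u v : Fin 2 → R) : wedge u v = -wedge v u := by
  unfold wedge; ring

lemma wedge_smul_left (c : R) (u v : Fin 2 → R) : wedge (c • u) v = c * wedge u v := by
  simp only [wedge, Pi.smul_apply, smul_eq_mul]; ring

lemma wedge_smul_right (c : R) (u v : Fin 2 → R) : wedge u (c • v) = c * wedge u v := by
  simp only [wedge, Pi.smul_apply, smul_eq_mul]; ring

lemma wedge_add_left (u v w : Fin 2 → R) : wedge (u + v) w = wedge u w + wedge v w := by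
  simp only [wedge, Pi.add_apply]; ring

lemma wedge_add_right (u v w : Fin 2 → R) : wedge u (v + w) = wedge u v + wedge u w := by
  simp only [wedge, Pi.add_apply]; ring

lemma quadMap_apply (a : Matrix (Fin 2) (Fin 3) R) (x : Fin 2 → R) (i : Fin 2) :
    quadMap a x i = a i 0 * x 0 ^ 2 + a i 1 * (x 0 * x 1) + a i 2 * x 1 ^ 2 := by
  simp [quadMap, Matrix.mulVec, dotProduct, Fin.sum_univ_three]

lemma quadMap_smul (a : Matrix (Fin 2) (Fin 3) R) (c : R) (x : Fin 2 → R) :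
    quadMap a (c • x) = c ^ 2 • quadMap a x := by
  ext i
  simp only [quadMap_apply, Pi.smul_apply, smul_eq_mul]; ring

lemma quadMap_zero (a : Matrix (Fin 2) (Fin 3) R) : quadMap a 0 = 0 := by
  simpa using quadMap_smul a 0 0

lemma quadMap_smul_add_smul (a : Matrix (Fin 2) (Fin 3) R) (s t : R) (x y : Fin 2 → R) :
    quadMap a (s • x + t • y) = s ^ 2 • quadMap a x +
      (s * t) • QuadraticMap.polar (quadMap a) x y + t ^ 2 • quadMap a y := by
  ext i
  simp only [QuadraticMap.polar, quadMap_apply, Pi.smul_apply, Pi.add_apply, Pi.sub_apply,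
    smul_eq_mul]
  ring

lemma wedge_quadMap_quadMap (a : Matrix (Fin 2) (Fin 3) R) (u v : Fin 2 → R) :
    wedge (quadMap a u) (quadMap a v) = wedge u v * bezoutian a u v := by
  simp only [wedge, quadMap_apply, bezoutian, minor]; ring

lemma wedge_polar_quadMap (a : Matrix (Fin 2) (Fin 3) R) (u v : Fin 2 → R) :
    wedge (QuadraticMap.polar (quadMap a) u v) (quadMap a v) = wedge u v * bezoutian a v v := by
  simp only [QuadraticMap.polar, wedge, Pi.sub_apply, Pi.add_apply, quadMap_apply, bezoutian,
    minor]
  ring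

lemma bezoutian_smul_smul (a : Matrix (Fin 2) (Fin 3) R) (c d : R) (u v : Fin 2 → R) :
    bezoutian a (c • u) (d • v) = c * d * bezoutian a u v := by
  simp only [bezoutian, Pi.smul_apply, smul_eq_mul]; ring

lemma bezoutian_plucker (a : Matrix (Fin 2) (Fin 3) R) (p u v w : Fin 2 → R) :
    bezoutian a u w * wedge p v - bezoutian a v w * wedge p u = wedge u v * bezoutian a p w := by
  simp only [bezoutian, wedge]; ring

lemma bezoutian_conjugate (a : Matrix (Fin 2) (Fin 3) R) (x : Fin 2 → R) :
    bezoutian a x (conjugate a x) = 0 := by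
  simp only [bezoutian, conjugate, Matrix.cons_val_zero, Matrix.cons_val_one]; ring

lemma wedge_conjugate (a : Matrix (Fin 2) (Fin 3) R) (x : Fin 2 → R) :
    wedge x (conjugate a x) = bezoutian a x x := by
  simp only [bezoutian, conjugate, wedge, Matrix.cons_val_zero, Matrix.cons_val_one]; ring

lemma wedge_quadMap_conjugate (a : Matrix (Fin 2) (Fin 3) R) (x : Fin 2 → R) :
    wedge (quadMap a x) (quadMap a (conjugate a x)) = 0 := by
  rw [wedge_quadMap_quadMap, bezoutian_conjugate, mul_zero]

lemma theta_smul (a b : Matrix (Fin 2) (Fin 3) R) (c : R) (z : Fin 2 → R) :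
    theta a b (c • z) = c ^ 5 * theta a b z := by
  simp only [theta, quadMap_smul, bezoutian_smul_smul]; ring

lemma wedge_quadMap_mul_theta (a b : Matrix (Fin 2) (Fin 3) R) (z : Fin 2 → R) :
    wedge (quadMap a (quadMap b z)) z * theta a b z =
      wedge (quadMap b (quadMap a (quadMap b z))) (quadMap b z) := by
  rw [wedge_quadMap_quadMap, theta]

lemma skewForm_smul_smul (a b : Matrix (Fin 2) (Fin 3) R) (s t : R) (x y : Fin 2 → R) :
    skewForm a b (s • x) (t • y) =
      s * t * (s * wedge (quadMap a x) y + t * wedge (quadMap b y) x) := by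
  simp only [skewForm, quadMap_smul, wedge_smul_left, wedge_smul_right]; ring

/-- The restriction of the surface to the line joining `z` to the third point of the chord
through `y` and `β z`: both `s ^ 3` and `s * t ^ 2` drop out. -/
lemma skewForm_tangent (a b : Matrix (Fin 2) (Fin 3) R) (s t : R) (y z : Fin 2 → R) :
    skewForm a b (s • wedge (quadMap b y) (quadMap b z) • quadMap b z)
        (s • -wedge (quadMap a (quadMap b z)) y • y + t • z) =
      wedge (quadMap b y) (quadMap b z) * wedge y z ^ 2 * theta a b z * (s ^ 2 * t) := by
  set x := quadMap b z with hx
  set A := wedge (quadMap a x) y with hA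
  set B := wedge (quadMap b y) x with hB
  have hBy : B = wedge y z * bezoutian b y z := wedge_quadMap_quadMap b y z
  have hpolar : wedge (QuadraticMap.polar (quadMap b) y z) x = wedge y z * bezoutian b z z :=
    wedge_polar_quadMap b y z
  have hplucker := bezoutian_plucker b (quadMap a x) y z z
  rw [smul_smul, smul_smul, skewForm, quadMap_smul_add_smul, quadMap_smul]
  simp only [wedge_add_left, wedge_add_right, wedge_smul_left, wedge_smul_right, ← hA, ← hB,
    ← hx, hpolar, wedge_self, theta]
  linear_combination (s ^ 2 * t * B * wedge y z) * hplucker +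
    (s ^ 2 * t * B * wedge (quadMap a x) z) * hBy

lemma map_wedge (f : R →+* S) (u v : Fin 2 → R) : f (wedge u v) = wedge (f ∘ u) (f ∘ v) := by
  simp [wedge]

lemma map_quadMap (f : R →+* S) (a : Matrix (Fin 2) (Fin 3) R) (x : Fin 2 → R) :
    f ∘ quadMap a x = quadMap (a.map f) (f ∘ x) := by
  ext i
  simp [quadMap_apply]

lemma map_bezoutian (f : R →+* S) (a : Matrix (Fin 2) (Fin 3) R) (u v : Fin 2 → R) :
    f (bezoutian a u v) = bezoutian (a.map f) (f ∘ u) (f ∘ v) := by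
  simp [bezoutian, minor]

lemma map_theta (f : R →+* S) (a b : Matrix (Fin 2) (Fin 3) R) (z : Fin 2 → R) :
    f (theta a b z) = theta (a.map f) (b.map f) (f ∘ z) := by
  simp only [theta, map_bezoutian, map_quadMap]

lemma map_skewForm (f : R →+* S) (a b : Matrix (Fin 2) (Fin 3) R) (x y : Fin 2 → R) :
    f (skewForm a b x y) = skewForm (a.map f) (b.map f) (f ∘ x) (f ∘ y) := by
  simp only [skewForm, map_add, map_wedge, map_quadMap]

lemma skewForm_comm (a b : Matrix (Fin 2) (Fin 3) R) (x y : Fin 2 → R) :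
    skewForm a b x y = skewForm b a y x :=
  add_comm _ _

end QuadraticMaps

section Field

variable {k : Type*} [Field k]

lemma exists_smul_of_wedge_eq_zero {u v : Fin 2 → k} (hv : v ≠ 0) (h : wedge u v = 0) :
    ∃ c : k, u = c • v := by
  have hminor : u 0 * v 1 = u 1 * v 0 := sub_eq_zero.mp h
  by_cases h0 : v 0 = 0
  · have h1 : v 1 ≠ 0 := fun h1 => hv (by ext i; fin_cases i <;> simp [h0, h1])
    refine ⟨u 1 / v 1, ?_⟩
    ext i
    fin_cases i
    · simpa [h0, h1] using hminor
    · simp [h1]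
  · refine ⟨u 0 / v 0, ?_⟩
    ext i
    fin_cases i
    · simp [h0]
    · simp only [Fin.mk_one, Pi.smul_apply, smul_eq_mul]
      field_simp
      linear_combination -hminor

lemma ne_zero_of_wedge_ne_zero_left {u v : Fin 2 → k} (h : wedge u v ≠ 0) : u ≠ 0 := by
  rintro rfl
  simp [wedge] at h

lemma ne_zero_of_wedge_ne_zero_right {u v : Fin 2 → k} (h : wedge u v ≠ 0) : v ≠ 0 := by
  rintro rfl
  simp [wedge] at h

lemma exists_wedge_ne_zero {u : Fin 2 → k} (hu : u ≠ 0) : ∃ v : Fin 2 → k, wedge u v ≠ 0 := by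
  by_contra! h
  refine hu (funext fun i => ?_)
  fin_cases i
  · simpa [wedge] using h ![0, 1]
  · simpa [wedge] using h ![1, 0]

end Field

section BinaryForms

variable {R k : Type*} [CommRing R] [Field k]

lemma isHomogeneous_of_X_mul {σ : Type*} {p : MvPolynomial σ R} {i : σ} {n : ℕ}
    (h : (X i * p).IsHomogeneous (n + 1)) : p.IsHomogeneous n := by
  intro d hd
  have hweight := h (d := Finsupp.single i 1 + d) (by rwa [coeff_X_mul])
  rw [map_add, Finsupp.weight_single] at hweight
  simp only [Pi.one_apply, smul_eq_mul, mul_one] at hweight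
  omega

/-- A form without zeros on `(t, 1)` is constant there, so it is `c X₁ ^ d` and vanishes at
`(1, 0)`. -/
lemma exists_ne_zero_eval_eq_zero [IsAlgClosed k] {p : MvPolynomial (Fin 2) k} {d : ℕ}
    (hp : p.IsHomogeneous d) (hd : d ≠ 0) : ∃ x ≠ 0, eval x p = 0 := by
  by_contra! hne
  let q : Polynomial k := aeval ![Polynomial.X, 1] p
  have eval_q (t : k) : q.eval t = eval ![t, 1] p := by
    simp [q, aeval_def, eval_eq', eval₂_eq', Fin.prod_univ_two, Polynomial.eval_finsetSum]
  have hdegree : q.degree = 0 := by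
    by_contra hdegree
    obtain ⟨t, ht⟩ := IsAlgClosed.exists_root q hdegree
    exact hne ![t, 1] (by simp) (by rw [← eval_q, ht])
  obtain ⟨c, hc⟩ : ∃ c, q = Polynomial.C c := ⟨_, Polynomial.eq_C_of_degree_eq_zero hdegree⟩
  have hmul : X 1 * (p - C c * X 1 ^ d) = 0 := by
    refine MvPolynomial.funext fun x => ?_
    by_cases hx : x 1 = 0
    · simp [hx]
    · have hxp : eval x p = x 1 ^ d * c := by
        have hx' : x = x 1 • ![x 0 / x 1, 1] := by
          ext i
          fin_cases i <;> simp [mul_div_cancel₀ _ hx]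
        rw [hx', eval_smul_of_isHomogeneous hp, ← eval_q, hc, Polynomial.eval_C]
        simp
      simp [hxp, mul_comm c]
  have hp' : p = C c * X 1 ^ d :=
    sub_eq_zero.mp ((mul_eq_zero.mp hmul).resolve_left (X_ne_zero 1))
  exact hne ![1, 0] (by simp) (by simp [hp', hd])

lemma exists_eq_smul_X_of_wedge_X_eq_zero [IsDomain R] {v : Fin 2 → MvPolynomial (Fin 2) R}
    {n : ℕ} (hv : ∀ i, (v i).IsHomogeneous (n + 1)) (h : wedge v X = 0) :
    ∃ p : MvPolynomial (Fin 2) R, p.IsHomogeneous n ∧ v = p • X := by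
  have hswap : v 0 * X 1 = v 1 * X 0 := sub_eq_zero.mp h
  obtain ⟨p, hp⟩ : X 0 ∣ v 0 :=
    ((X_prime (i := 0)).dvd_or_dvd (hswap ▸ dvd_mul_left _ _)).resolve_right
      fun hdvd => zero_ne_one (X_dvd_X.mp hdvd)
  have hp' : v 1 = X 1 * p := by
    refine mul_left_cancel₀ (X_ne_zero (R := R) (0 : Fin 2)) ?_
    rw [mul_comm, ← hswap, hp]
    ring
  refine ⟨p, isHomogeneous_of_X_mul (hp ▸ hv 0), ?_⟩
  ext1 i
  fin_cases i
  · exact hp.trans (mul_comm _ _)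
  · exact hp'.trans (mul_comm _ _)

variable {σ : Type*} {m n : ℕ} {u v : Fin 2 → MvPolynomial σ R}

lemma isHomogeneous_wedge (hu : ∀ i, (u i).IsHomogeneous m) (hv : ∀ i, (v i).IsHomogeneous n) :
    (wedge u v).IsHomogeneous (m + n) :=
  ((hu 0).mul (hv 1)).sub ((hu 1).mul (hv 0))

lemma isHomogeneous_quadMap (a : Matrix (Fin 2) (Fin 3) R) (hu : ∀ i, (u i).IsHomogeneous m)
    (i : Fin 2) : (quadMap (a.map C) u i).IsHomogeneous (2 * m) := by
  have hmul (j j' : Fin 2) : (u j * u j').IsHomogeneous (2 * m) := two_mul m ▸ (hu j).mul (hu j')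
  simp only [quadMap_apply, Matrix.map_apply, sq]
  exact (((hmul 0 0).C_mul _).add ((hmul 0 1).C_mul _)).add ((hmul 1 1).C_mul _)

lemma isHomogeneous_bezoutian (a : Matrix (Fin 2) (Fin 3) R) (hu : ∀ i, (u i).IsHomogeneous m)
    (hv : ∀ i, (v i).IsHomogeneous n) : (bezoutian (a.map C) u v).IsHomogeneous (m + n) := by
  have hminor (i j : Fin 3) : minor (a.map C) i j = (C (minor a i j) : MvPolynomial σ R) := by
    simp [minor]
  have hmul (i j : Fin 2) := (hu i).mul (hv j)
  simp only [bezoutian, hminor]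
  exact (((hmul 0 0).C_mul _).add (((hmul 0 1).add (hmul 1 0)).C_mul _)).add ((hmul 1 1).C_mul _)

lemma isHomogeneous_theta (a b : Matrix (Fin 2) (Fin 3) R) (hu : ∀ i, (u i).IsHomogeneous m) :
    (theta (a.map C) (b.map C) u).IsHomogeneous (5 * m) := by
  have hquintic := isHomogeneous_bezoutian b
    (isHomogeneous_quadMap a (isHomogeneous_quadMap b hu)) hu
  rwa [show 2 * (2 * m) + m = 5 * m by ring] at hquintic

lemma map_C_map_eval₂Hom {S : Type*} [CommRing S] (f : R →+* S) (x : σ → S)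
    (a : Matrix (Fin 2) (Fin 3) R) : (a.map C).map (eval₂Hom f x) = a.map f := by
  ext; simp

lemma eval₂Hom_comp_X {S : Type*} [CommRing S] (f : R →+* S) (x : σ → S) :
    eval₂Hom f x ∘ X = x := by
  ext; simp

lemma eval₂Hom_comp_C_comp {S ι : Type*} [CommRing S] (f : R →+* S) (x : σ → S) (y : ι → R) :
    eval₂Hom f x ∘ C ∘ y = f ∘ y := by
  ext; simp

lemma map_C_map_eval (x : σ → R) (a : Matrix (Fin 2) (Fin 3) R) :
    (a.map C).map (eval x) = a := by
  ext; simp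

lemma eval_comp_X (x : σ → R) : eval x ∘ X = x := by
  ext; simp

lemma eval_comp_C_comp {ι : Type*} (x : σ → R) (y : ι → R) : eval x ∘ C ∘ y = y := by
  ext; simp

end BinaryForms

section AlgebraicallyClosed

variable {R k : Type*} [CommRing R] [Field k]

/-- The two components of `quadMap a` have no common zero, so that it induces a morphism from the
projective line to itself. -/
def IsBasePointFree (a : Matrix (Fin 2) (Fin 3) R) : Prop := ∀ x, quadMap a x = 0 → x = 0

variable [IsAlgClosed k] {a b : Matrix (Fin 2) (Fin 3) k}

lemma IsBasePointFree.exists_quadMap_eq_smul (ha : IsBasePointFree a) {y : Fin 2 → k}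
    (hy : y ≠ 0) : ∃ (x : Fin 2 → k) (c : k), c ≠ 0 ∧ quadMap a x = c • y := by
  let p : MvPolynomial (Fin 2) k := wedge (quadMap (a.map C) X) (C ∘ y)
  have hp : p.IsHomogeneous (2 * 1 + 0) := isHomogeneous_wedge
    (isHomogeneous_quadMap a (isHomogeneous_X k)) fun i => isHomogeneous_C _ (y i)
  obtain ⟨x, hx, hpx⟩ := exists_ne_zero_eval_eq_zero hp (by norm_num)
  have heval : eval x p = wedge (quadMap a x) y := by
    rw [map_wedge, map_quadMap, map_C_map_eval, eval_comp_X, eval_comp_C_comp]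
  obtain ⟨c, hc⟩ := exists_smul_of_wedge_eq_zero hy (heval ▸ hpx)
  refine ⟨x, c, ?_, hc⟩
  rintro rfl
  exact hx (ha x (by rw [hc, zero_smul]))

lemma IsBasePointFree.exists_wedge_quadMap_ne_zero (ha : IsBasePointFree a) {u : Fin 2 → k}
    (hu : u ≠ 0) : ∃ x, wedge (quadMap a x) u ≠ 0 := by
  obtain ⟨v, huv⟩ := exists_wedge_ne_zero hu
  obtain ⟨x, c, hc, hx⟩ := ha.exists_quadMap_eq_smul (ne_zero_of_wedge_ne_zero_right huv)
  refine ⟨x, ?_⟩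
  rw [hx, wedge_smul_left, wedge_swap]
  exact mul_ne_zero hc (neg_ne_zero.mpr huv)

lemma IsBasePointFree.exists_bezoutian_ne_zero (ha : IsBasePointFree a) :
    ∃ x y, bezoutian a x y ≠ 0 := by
  have hx : quadMap a ![1, 0] ≠ 0 := mt (ha _) (by simp)
  obtain ⟨y, hy⟩ := ha.exists_wedge_quadMap_ne_zero hx
  rw [wedge_quadMap_quadMap] at hy
  exact ⟨y, _, right_ne_zero_of_mul hy⟩

/-- If `β ∘ α` were the identity of the projective line, then `β (α x) = Λ(x) x` for a cubic form
`Λ`, and `β ∘ α` would vanish at the zeros of `Λ`. -/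
lemma IsBasePointFree.exists_wedge_comp_ne_zero (ha : IsBasePointFree a)
    (hb : IsBasePointFree b) : ∃ x, wedge (quadMap b (quadMap a x)) x ≠ 0 := by
  by_contra! hfix
  let v : Fin 2 → MvPolynomial (Fin 2) k := quadMap (b.map C) (quadMap (a.map C) X)
  have hv : ∀ i, (v i).IsHomogeneous (2 * (2 * 1)) :=
    isHomogeneous_quadMap b (isHomogeneous_quadMap a (isHomogeneous_X k))
  have eval_v (x : Fin 2 → k) : eval x ∘ v = quadMap b (quadMap a x) := by
    simp only [v, map_quadMap, map_C_map_eval, eval_comp_X]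
  have hwedge : wedge v X = 0 := MvPolynomial.funext fun x => by
    rw [map_wedge, eval_v, eval_comp_X, hfix, map_zero]
  obtain ⟨Λ, hΛ, hvΛ⟩ := exists_eq_smul_X_of_wedge_X_eq_zero hv hwedge
  obtain ⟨x, hx, hΛx⟩ := exists_ne_zero_eval_eq_zero hΛ (by norm_num)
  refine hx (ha x (hb _ ?_))
  rw [← eval_v, hvΛ]
  ext i
  simp [hΛx]

lemma IsBasePointFree.exists_theta_quadMap_ne_zero (ha : IsBasePointFree a)
    (hb : IsBasePointFree b) : ∃ x, theta a b (quadMap a x) ≠ 0 := by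
  obtain ⟨s, hs⟩ := ha.exists_wedge_comp_ne_zero hb
  obtain ⟨y, c, hc, hy⟩ := hb.exists_quadMap_eq_smul (ne_zero_of_wedge_ne_zero_right hs)
  have hθy : theta a b y ≠ 0 := by
    refine right_ne_zero_of_mul (a := wedge (quadMap a (quadMap b y)) y) ?_
    rw [wedge_quadMap_mul_theta, hy]
    simp only [quadMap_smul, wedge_smul_left, wedge_smul_right]
    exact mul_ne_zero hc (mul_ne_zero (pow_ne_zero _ (pow_ne_zero _ hc)) hs)
  have hy0 : y ≠ 0 := by
    rintro rfl
    simp [theta, bezoutian] at hθy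
  obtain ⟨x, d, hd, hx⟩ := ha.exists_quadMap_eq_smul hy0
  refine ⟨x, ?_⟩
  rw [hx, theta_smul]
  exact mul_ne_zero (pow_ne_zero 5 hd) hθy

end AlgebraicallyClosed

section SmallFields

variable {K L : Type*} [Field K] [Field L] {f : K →+* L} {a b : Matrix (Fin 2) (Fin 3) K}

lemma IsBasePointFree.of_map (ha : IsBasePointFree (a.map f)) : IsBasePointFree a := by
  intro x hx
  have hfx : f ∘ x = 0 := ha _ (by rw [← map_quadMap, hx]; ext; simp)
  ext i
  exact (map_eq_zero f).mp (congrFun hfx i)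

lemma exists_eval_ne_zero {p : MvPolynomial (Fin 2) K} {n : ℕ} (hp : p.IsHomogeneous n)
    (h0 : p ≠ 0) (hn : n ≤ Cardinal.mk K) : ∃ x, eval x p ≠ 0 := by
  contrapose! h0
  exact hp.eq_zero_of_forall_eval_eq_zero_of_le_card h0 hn

lemma sixteen_le_mk_of_two_eq_zero (hK : 13 ≤ Cardinal.mk K) (h2 : (2 : K) = 0) :
    16 ≤ Cardinal.mk K := by
  cases finite_or_infinite K with
  | inr _ => exact (Cardinal.natCast_lt_aleph0 (n := 16)).le.trans (Cardinal.aleph0_le_mk K)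
  | inl _ =>
    have := Fintype.ofFinite K
    have : CharP K 2 := CharTwo.of_one_ne_zero_of_two_eq_zero one_ne_zero h2
    obtain ⟨n, -, hcard⟩ := FiniteField.card K 2
    rw [Cardinal.mk_fintype] at hK ⊢
    have hn : 3 < (n : ℕ) := by
      by_contra! hn
      have hpow : 2 ^ (n : ℕ) ≤ 2 ^ 3 := Nat.pow_le_pow_right two_pos hn
      have hK' : 13 ≤ Fintype.card K := by exact_mod_cast hK
      omega
    rw [hcard]
    exact_mod_cast Nat.pow_le_pow_right two_pos hn

variable [IsAlgClosed L]

lemma wedge_comp_X_ne_zero (ha : IsBasePointFree (a.map f)) (hb : IsBasePointFree (b.map f)) :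
    wedge (quadMap (b.map C) (quadMap (a.map C) X)) (X : Fin 2 → MvPolynomial (Fin 2) K) ≠ 0 := by
  obtain ⟨x, hx⟩ := ha.exists_wedge_comp_ne_zero hb
  intro h
  apply hx
  simpa only [map_wedge, map_quadMap, map_C_map_eval₂Hom, eval₂Hom_comp_X, map_zero] using
    congrArg (eval₂Hom f x) h

lemma theta_quadMap_X_ne_zero (ha : IsBasePointFree (a.map f))
    (hb : IsBasePointFree (b.map f)) :
    theta (a.map C) (b.map C) (quadMap (a.map C) (X : Fin 2 → MvPolynomial (Fin 2) K)) ≠ 0 := by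
  obtain ⟨x, hx⟩ := ha.exists_theta_quadMap_ne_zero hb
  intro h
  apply hx
  simpa only [map_theta, map_quadMap, map_C_map_eval₂Hom, eval₂Hom_comp_X, map_zero] using
    congrArg (eval₂Hom f x) h

lemma theta_X_ne_zero (ha : IsBasePointFree (a.map f)) (hb : IsBasePointFree (b.map f)) :
    theta (a.map C) (b.map C) (X : Fin 2 → MvPolynomial (Fin 2) K) ≠ 0 := by
  obtain ⟨x, hx⟩ := ha.exists_theta_quadMap_ne_zero hb
  intro h
  apply hx
  simpa only [map_theta, map_C_map_eval₂Hom, eval₂Hom_comp_X, map_zero] using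
    congrArg (eval₂Hom f (quadMap (a.map f) x)) h

lemma wedge_quadMap_X_ne_zero (hb : IsBasePointFree (b.map f)) {u : Fin 2 → K} (hu : u ≠ 0) :
    wedge (quadMap (b.map C) X) (C ∘ u : Fin 2 → MvPolynomial (Fin 2) K) ≠ 0 := by
  have hfu : f ∘ u ≠ 0 := fun h => hu (funext fun i => (map_eq_zero f).mp (congrFun h i))
  obtain ⟨x, hx⟩ := hb.exists_wedge_quadMap_ne_zero hfu
  intro h
  apply hx
  simpa only [map_wedge, map_quadMap, map_C_map_eval₂Hom, eval₂Hom_comp_X, eval₂Hom_comp_C_comp,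
    map_zero] using congrArg (eval₂Hom f x) h

/-- If the diagonal of the Bezoutian vanishes identically, only the minor on the outer columns
survives, and it is its own negative. -/
lemma two_eq_zero_of_bezoutian_X_eq_zero (ha : IsBasePointFree (a.map f))
    (h : bezoutian (a.map C) X (X : Fin 2 → MvPolynomial (Fin 2) K) = 0) : (2 : K) = 0 := by
  have hdiag (x : Fin 2 → K) : bezoutian a x x = 0 := by
    simpa only [map_bezoutian, map_C_map_eval, eval_comp_X, map_zero] using
      congrArg (eval x) h
  have h01 : minor a 0 1 = 0 := by simpa [bezoutian] using hdiag ![1, 0]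
  have h12 : minor a 1 2 = 0 := by simpa [bezoutian] using hdiag ![0, 1]
  have h02 : 2 * minor a 0 2 = 0 := by
    simpa [bezoutian, h01, h12, one_add_one_eq_two, mul_comm] using hdiag ![1, 1]
  refine (mul_eq_zero.mp h02).resolve_right fun h02 => ?_
  have hminor (i j : Fin 3) : minor (a.map f) i j = f (minor a i j) := by simp [minor]
  obtain ⟨u, v, huv⟩ := ha.exists_bezoutian_ne_zero
  exact huv (by simp [bezoutian, hminor, h01, h02, h12])

lemma exists_gauss_theta_ne_zero (hK : 13 ≤ Cardinal.mk K) (ha : IsBasePointFree (a.map f))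
    (hb : IsBasePointFree (b.map f)) :
    ∃ x z, wedge (quadMap a x) z = 0 ∧ wedge (quadMap b z) x ≠ 0 ∧ theta a b z ≠ 0 := by
  have hX : ∀ i, (X i : MvPolynomial (Fin 2) K).IsHomogeneous 1 := isHomogeneous_X K
  have hθ := isHomogeneous_theta a b (isHomogeneous_quadMap a hX)
  have hθ0 := theta_quadMap_X_ne_zero ha hb
  by_cases hJ0 : bezoutian (a.map C) X (X : Fin 2 → MvPolynomial (Fin 2) K) = 0
  · have hK16 := sixteen_le_mk_of_two_eq_zero hK (two_eq_zero_of_bezoutian_X_eq_zero ha hJ0)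
    have hfix := isHomogeneous_wedge (isHomogeneous_quadMap b (isHomogeneous_quadMap a hX)) hX
    obtain ⟨x, hx⟩ := exists_eval_ne_zero (hθ.mul hfix)
      (mul_ne_zero hθ0 (wedge_comp_X_ne_zero ha hb)) (le_trans (by norm_num) hK16)
    simp only [map_mul, map_theta, map_wedge, map_quadMap, map_C_map_eval, eval_comp_X] at hx
    exact ⟨x, quadMap a x, wedge_self _, right_ne_zero_of_mul hx, left_ne_zero_of_mul hx⟩
  · obtain ⟨x, hx⟩ := exists_eval_ne_zero (hθ.mul (isHomogeneous_bezoutian a hX hX))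
      (mul_ne_zero hθ0 hJ0) (le_trans (by norm_num) hK)
    simp only [map_mul, map_theta, map_bezoutian, map_quadMap, map_C_map_eval, eval_comp_X] at hx
    have hθx := left_ne_zero_of_mul hx
    have hJx : wedge x (conjugate a x) ≠ 0 := wedge_conjugate a x ▸ right_ne_zero_of_mul hx
    by_cases hfix : wedge (quadMap b (quadMap a x)) x = 0
    · obtain ⟨c, hc⟩ := exists_smul_of_wedge_eq_zero (ne_zero_of_wedge_ne_zero_left hJx) hfix
      have hc0 : c ≠ 0 := by
        rintro rfl
        have hx0 : x = 0 := ha.of_map x (hb.of_map _ (by rw [hc, zero_smul]))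
        exact ne_zero_of_wedge_ne_zero_left hJx hx0
      refine ⟨conjugate a x, quadMap a x, ?_, ?_, hθx⟩
      · rw [wedge_swap, wedge_quadMap_conjugate, neg_zero]
      · rw [hc, wedge_smul_left]
        exact mul_ne_zero hc0 hJx
    · exact ⟨x, quadMap a x, wedge_self _, hfix, hθx⟩

lemma exists_theta_ne_zero_wedge_ne_zero (hK : 9 ≤ Cardinal.mk K)
    (ha : IsBasePointFree (a.map f)) (hb : IsBasePointFree (b.map f)) {u v : Fin 2 → K}
    (hu : u ≠ 0) (hv : v ≠ 0) :
    ∃ w, theta a b w ≠ 0 ∧ wedge (quadMap b w) u ≠ 0 ∧ wedge (quadMap b w) v ≠ 0 := by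
  have hX : ∀ i, (X i : MvPolynomial (Fin 2) K).IsHomogeneous 1 := isHomogeneous_X K
  have hquadratic (u : Fin 2 → K) :
      (wedge (quadMap (b.map C) X) (C ∘ u : Fin 2 → MvPolynomial (Fin 2) K)).IsHomogeneous 2 :=
    isHomogeneous_wedge (isHomogeneous_quadMap b hX) fun i => isHomogeneous_C _ (u i)
  obtain ⟨w, hw⟩ := exists_eval_ne_zero
    (((isHomogeneous_theta a b hX).mul (hquadratic u)).mul (hquadratic v))
    (mul_ne_zero (mul_ne_zero (theta_X_ne_zero ha hb) (wedge_quadMap_X_ne_zero hb hu))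
      (wedge_quadMap_X_ne_zero hb hv)) hK
  simp only [map_mul, map_theta, map_wedge, map_quadMap, map_C_map_eval, eval_comp_X,
    eval_comp_C_comp] at hw
  have hw' := left_ne_zero_of_mul hw
  exact ⟨w, left_ne_zero_of_mul hw', right_ne_zero_of_mul hw', right_ne_zero_of_mul hw⟩

theorem forall_of_chord_of_tangent (hK : 13 ≤ Cardinal.mk K)
    (ha : IsBasePointFree (a.map f)) (hb : IsBasePointFree (b.map f)) {p : (Fin 2 → K) → Prop}
    (chord : ∀ x y, wedge (quadMap a x) y = 0 → wedge (quadMap b y) x ≠ 0 → p y)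
    (tangent : ∀ y z, p z → theta a b z ≠ 0 → wedge (quadMap b y) (quadMap b z) ≠ 0 → p y)
    {y : Fin 2 → K} (hy : y ≠ 0) : p y := by
  obtain ⟨x, z, hxz, hzx, hθz⟩ := exists_gauss_theta_ne_zero hK ha hb
  have hβz : quadMap b z ≠ 0 := ne_zero_of_wedge_ne_zero_left hzx
  have hβy : quadMap b y ≠ 0 := mt (hb.of_map y) hy
  obtain ⟨w, hθw, hwz, hwy⟩ :=
    exists_theta_ne_zero_wedge_ne_zero (le_trans (by norm_num) hK) ha hb hβz hβy
  have hpw : p w := tangent w z (chord x z hxz hzx) hθz hwz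
  refine tangent y w hpw hθw ?_
  rwa [wedge_swap, neg_ne_zero]

end SmallFields

section CubicForms

variable {R : Type*} [CommRing R] {σ : Type*} [Fintype σ]

lemma exists_eq_sum_X_mul {p : MvPolynomial σ R} {n : ℕ} (hp : p.IsHomogeneous (n + 1)) :
    ∃ q : σ → MvPolynomial σ R, (∀ i, (q i).IsHomogeneous n) ∧ p = ∑ i, X i * q i := by
  rw [← mem_homogeneousSubmodule, ← homogeneousSubmodule_one_pow, pow_succ',
    homogeneousSubmodule_one_pow] at hp
  induction hp using Submodule.mul_induction_on' with
  | mem_mul_mem l hl q hq =>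
    rw [homogeneousSubmodule_one_eq_span_X, Submodule.mem_span_range_iff_exists_fun] at hl
    obtain ⟨c, rfl⟩ := hl
    refine ⟨fun i => C (c i) * q, fun i => IsHomogeneous.C_mul hq (c i), ?_⟩
    simp only [Finset.sum_mul, smul_eq_C_mul]
    exact Finset.sum_congr rfl fun i _ => by ring
  | add p _ p' _ hp hp' =>
    obtain ⟨q, hq, rfl⟩ := hp
    obtain ⟨q', hq', rfl⟩ := hp'
    exact ⟨q + q', fun i => (hq i).add (hq' i), by simp [mul_add, Finset.sum_add_distrib]⟩

lemma exists_eq_sum_C_mul_X_mul_X_mul_X {p : MvPolynomial σ R} (hp : p.IsHomogeneous 3) :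
    ∃ c : σ → σ → σ → R, p = ∑ i, ∑ j, ∑ k, C (c i j k) * (X i * X j * X k) := by
  obtain ⟨q, hq, rfl⟩ := exists_eq_sum_X_mul hp
  choose r hr hqr using fun i => exists_eq_sum_X_mul (hq i)
  choose s hs hrs using fun i j => exists_eq_sum_X_mul (hr i j)
  refine ⟨fun i j k => coeff 0 (s i j k), ?_⟩
  have hC (i j k : σ) : C (coeff 0 (s i j k)) = s i j k :=
    (totalDegree_eq_zero_iff_eq_C.mp (Nat.le_zero.mp (hs i j k).totalDegree_le)).symm
  simp only [hC]
  simp_rw [hqr, hrs, Finset.mul_sum]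
  exact Finset.sum_congr rfl fun i _ => Finset.sum_congr rfl fun j _ =>
    Finset.sum_congr rfl fun k _ => by ring

/-- The eight blocks of the coefficient tensor are cubic in `x`, cubic in `y`, or mixed. -/
lemma exists_eq_skewForm {p : MvPolynomial (Fin 2 ⊕ Fin 2) R} (hp : p.IsHomogeneous 3)
    (hx : aeval (Sum.elim X 0 : _ → MvPolynomial (Fin 2) R) p = 0)
    (hy : aeval (Sum.elim 0 X : _ → MvPolynomial (Fin 2) R) p = 0) :
    ∃ a b : Matrix (Fin 2) (Fin 3) R,
      p = skewForm (a.map C) (b.map C) (X ∘ Sum.inl) (X ∘ Sum.inr) := by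
  obtain ⟨c, hc⟩ := exists_eq_sum_C_mul_X_mul_X_mul_X hp
  have hxxx := congrArg (rename (Sum.inl : Fin 2 → Fin 2 ⊕ Fin 2)) hx
  have hyyy := congrArg (rename (Sum.inr : Fin 2 → Fin 2 ⊕ Fin 2)) hy
  simp only [hc, Fintype.sum_sum_type, Fin.sum_univ_two, map_add, map_mul, map_zero, aeval_X,
    algHom_C, algebraMap_eq, rename_X, Sum.elim_inl, Sum.elim_inr, Pi.zero_apply, mul_zero,
    zero_mul, add_zero, zero_add] at hxxx hyyy
  let a (k : Fin 2) : Fin 3 → R :=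
    let s (i j : Fin 2) := c (.inl i) (.inl j) (.inr k) + c (.inl i) (.inr k) (.inl j) +
      c (.inr k) (.inl i) (.inl j)
    ![s 0 0, s 0 1 + s 1 0, s 1 1]
  let b (k : Fin 2) : Fin 3 → R :=
    let s (i j : Fin 2) := c (.inr i) (.inr j) (.inl k) + c (.inr i) (.inl k) (.inr j) +
      c (.inl k) (.inr i) (.inr j)
    ![s 0 0, s 0 1 + s 1 0, s 1 1]
  refine ⟨Matrix.of ![a 1, -a 0], Matrix.of ![b 1, -b 0], ?_⟩
  simp only [hc, Fintype.sum_sum_type, Fin.sum_univ_two, skewForm, wedge, quadMap_apply,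
    Matrix.map_apply, Matrix.of_apply, Function.comp_apply, Pi.neg_apply, a, b,
    Matrix.cons_val_zero, Matrix.cons_val_one, Matrix.cons_val, map_add, map_neg]
  linear_combination hxxx + hyyy

end CubicForms

section AdaptedCoordinates

variable {K : Type*} [Field K] {n : ℕ}

/-- Coordinates `x`, `y` on two skew lines `W`, `W'` of the cubic surface `F = 0`, given by
mutually inverse pairs of matrices, and the normal form of `F` in these coordinates. -/
structure AdaptedCoordinates (F : MvPolynomial (Fin n) K) (W W' : Submodule K (Fin n → K)) where
  param : Matrix (Fin n) (Fin 2) K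
  param' : Matrix (Fin n) (Fin 2) K
  coord : Matrix (Fin 2) (Fin n) K
  coord' : Matrix (Fin 2) (Fin n) K
  gauss : Matrix (Fin 2) (Fin 3) K
  gauss' : Matrix (Fin 2) (Fin 3) K
  range_param : LinearMap.range param.mulVecLin = W
  range_param' : LinearMap.range param'.mulVecLin = W'
  coord_mul_param : coord * param = 1
  coord_mul_param' : coord * param' = 0
  coord'_mul_param : coord' * param = 0
  coord'_mul_param' : coord' * param' = 1
  eq_skewForm :
    F = skewForm (gauss.map C) (gauss'.map C) coord.toMvPolynomial coord'.toMvPolynomial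

lemma lineRestrict_mulVec (F : MvPolynomial (Fin n) K) (M : Matrix (Fin n) (Fin 2) K) :
    lineRestrict F (M.mulVec ![1, 0]) (M.mulVec ![0, 1]) = aeval M.toMvPolynomial F := by
  unfold lineRestrict
  congr
  ext1 i
  simp [Matrix.toMvPolynomial, Matrix.mulVec, dotProduct, C_mul_X_eq_monomial]

lemma exists_eq_skewForm_toMvPolynomial {F : MvPolynomial (Fin n) K} (hF : F.IsHomogeneous 3)
    {M M' : Matrix (Fin n) (Fin 2) K} {N N' : Matrix (Fin 2) (Fin n) K}
    (hMN : M * N + M' * N' = 1) (hM : aeval M.toMvPolynomial F = 0)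
    (hM' : aeval M'.toMvPolynomial F = 0) :
    ∃ a b : Matrix (Fin 2) (Fin 3) K,
      F = skewForm (a.map C) (b.map C) N.toMvPolynomial N'.toMvPolynomial := by
  let P : Matrix (Fin n) (Fin 2 ⊕ Fin 2) K := Matrix.fromCols M M'
  let Q : Matrix (Fin 2 ⊕ Fin 2) (Fin n) K := Matrix.fromRows N N'
  have hPQ : P * Q = 1 := by rw [Matrix.fromCols_mul_fromRows, hMN]
  let G := bind₁ P.toMvPolynomial F
  have hG : G.IsHomogeneous 3 := one_mul 3 ▸ hF.aeval _ P.toMvPolynomial_isHomogeneous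
  have hx : aeval (Sum.elim X 0 : _ → MvPolynomial (Fin 2) K) G = 0 := by
    rw [← hM, aeval_bind₁]
    congr
    ext1 i
    simp [P, Matrix.toMvPolynomial, ← C_mul_X_eq_monomial, algHom_C]
  have hy : aeval (Sum.elim 0 X : _ → MvPolynomial (Fin 2) K) G = 0 := by
    rw [← hM', aeval_bind₁]
    congr
    ext1 i
    simp [P, Matrix.toMvPolynomial, ← C_mul_X_eq_monomial, algHom_C]
  obtain ⟨a, b, hab⟩ := exists_eq_skewForm hG hx hy
  refine ⟨a, b, ?_⟩
  have hFG : F = bind₁ Q.toMvPolynomial G := by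
    simp_rw [G, bind₁_bind₁, ← Matrix.toMvPolynomial_mul, hPQ, Matrix.toMvPolynomial_one,
      bind₁_X_left, AlgHom.id_apply]
  have hmap := map_skewForm (bind₁ Q.toMvPolynomial).toRingHom (a.map C) (b.map C)
    (X ∘ Sum.inl) (X ∘ Sum.inr)
  rw [← hab] at hmap
  refine hFG.trans (hmap.trans ?_)
  congr 1 <;> ext i : 1 <;> simp [Q, Matrix.toMvPolynomial, Function.comp_def]

lemma exists_matrix_of_isCompl {d d' : ℕ} {W W' : Submodule K (Fin n → K)} (h : IsCompl W W')
    (hW : Module.finrank K W = d) (hW' : Module.finrank K W' = d') :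
    ∃ (M : Matrix (Fin n) (Fin d) K) (M' : Matrix (Fin n) (Fin d') K)
      (N : Matrix (Fin d) (Fin n) K) (N' : Matrix (Fin d') (Fin n) K),
      LinearMap.range M.mulVecLin = W ∧ LinearMap.range M'.mulVecLin = W' ∧
      M * N + M' * N' = 1 ∧ N * M = 1 ∧ N * M' = 0 ∧ N' * M = 0 ∧ N' * M' = 1 := by
  let e := (Module.finBasisOfFinrankEq K W hW).equivFun
  let e' := (Module.finBasisOfFinrankEq K W' hW').equivFun
  let i := W.subtype ∘ₗ e.symm.toLinearMap
  let i' := W'.subtype ∘ₗ e'.symm.toLinearMap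
  let r := e.toLinearMap ∘ₗ W.projectionOnto W' h
  let r' := e'.toLinearMap ∘ₗ W'.projectionOnto W h.symm
  have hsum : i ∘ₗ r + i' ∘ₗ r' = LinearMap.id := LinearMap.ext fun v => by
    simp [i, i', r, r', Submodule.projection_add_projection_eq_self h]
  have hri : r ∘ₗ i = LinearMap.id := LinearMap.ext fun x => by simp [r, i]
  have hri' : r ∘ₗ i' = 0 := LinearMap.ext fun x => by simp [r, i']
  have hr'i : r' ∘ₗ i = 0 := LinearMap.ext fun x => by simp [r', i]
  have hr'i' : r' ∘ₗ i' = LinearMap.id := LinearMap.ext fun x => by simp [r', i']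
  refine ⟨i.toMatrix', i'.toMatrix', r.toMatrix', r'.toMatrix', ?_, ?_, ?_, ?_, ?_, ?_, ?_⟩
  · rw [← Matrix.toLin'_apply', Matrix.toLin'_toMatrix', LinearEquiv.range_comp,
      Submodule.range_subtype]
  · rw [← Matrix.toLin'_apply', Matrix.toLin'_toMatrix', LinearEquiv.range_comp,
      Submodule.range_subtype]
  all_goals simp only [← LinearMap.toMatrix'_comp, ← map_add, hsum, hri, hri', hr'i, hr'i',
    LinearMap.toMatrix'_id, map_zero]

lemma aeval_toMvPolynomial_eq_zero {F : MvPolynomial (Fin n) K} {W : Submodule K (Fin n → K)}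
    (h : LineOnSurf F W) {M : Matrix (Fin n) (Fin 2) K} (hM : LinearMap.range M.mulVecLin = W) :
    aeval M.toMvPolynomial F = 0 := by
  have hmem (x : Fin 2 → K) : M.mulVec x ∈ W := hM ▸ LinearMap.mem_range_self M.mulVecLin x
  rw [← lineRestrict_mulVec]
  exact h _ _ (hmem _) (hmem _)

lemma nonempty_adaptedCoordinates {F : MvPolynomial (Fin 4) K} (hF : F.IsHomogeneous 3)
    {W W' : Submodule K (Fin 4 → K)} (hW : IsLine W) (hW' : IsLine W') (hFW : LineOnSurf F W)
    (hFW' : LineOnSurf F W') (hskew : W ⊓ W' = ⊥) : Nonempty (AdaptedCoordinates F W W') := by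
  have hdisj : Disjoint W W' := disjoint_iff.mpr hskew
  have hsup : W ⊔ W' = ⊤ :=
    Submodule.eq_top_of_disjoint W W' (by rw [hW, hW', Module.finrank_fin_fun]) hdisj
  obtain ⟨M, M', N, N', hM, hM', hsum, hNM, hNM', hN'M, hN'M'⟩ :=
    exists_matrix_of_isCompl ⟨hdisj, codisjoint_iff.mpr hsup⟩ hW hW'
  obtain ⟨a, b, hab⟩ := exists_eq_skewForm_toMvPolynomial hF hsum
    (aeval_toMvPolynomial_eq_zero hFW hM) (aeval_toMvPolynomial_eq_zero hFW' hM')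
  exact ⟨⟨M, M', N, N', a, b, hM, hM', hNM, hNM', hN'M, hN'M', hab⟩⟩

end AdaptedCoordinates

section Smoothness

variable {K : Type*} [Field K] {n : ℕ} {F : MvPolynomial (Fin n) K}
  {W W' : Submodule K (Fin n → K)}

lemma eval_skewForm_eq_zero {σ R : Type*} [CommRing R] {a b : Matrix (Fin 2) (Fin 3) R}
    {p q : Fin 2 → MvPolynomial σ R} {v : σ → R} (ha : quadMap a (eval v ∘ p) = 0)
    (hq : eval v ∘ q = 0) : eval v (skewForm (a.map C) (b.map C) p q) = 0 := by
  rw [map_skewForm, map_C_map_eval, map_C_map_eval, hq, skewForm, quadMap_zero, ha]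
  simp [wedge]

/-- Every summand of `skewForm a b p q` has a factor which vanishes at `v` to second order or two
factors which vanish at `v`. -/
lemma eval_pderiv_skewForm_eq_zero {σ R : Type*} [CommRing R] {a b : Matrix (Fin 2) (Fin 3) R}
    {p q : Fin 2 → MvPolynomial σ R} {v : σ → R} (ha : quadMap a (eval v ∘ p) = 0)
    (hq : eval v ∘ q = 0) (i : σ) :
    eval v (pderiv i (skewForm (a.map C) (b.map C) p q)) = 0 := by
  have hquad : eval v ∘ quadMap (a.map C) p = 0 := by rw [map_quadMap, map_C_map_eval, ha]
  have ha' (j : Fin 2) : eval v (quadMap (a.map C) p j) = 0 := congrFun hquad j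
  have hq' (j : Fin 2) : eval v (q j) = 0 := congrFun hq j
  simp [skewForm, wedge, Derivation.leibniz, ha', hq', quadMap_apply (b.map C)]

/-- The projective hypersurface `F = 0` is smooth at all geometric points of the linear
subspace `W`. -/
def IsSmoothAlong (F : MvPolynomial (Fin n) K) (W : Submodule K (Fin n → K)) : Prop :=
  ∀ v ∈ Submodule.span (AlgebraicClosure K)
      (clVec (algebraMap K (AlgebraicClosure K)) '' (W : Set (Fin n → K))),
    eval v (MvPolynomial.map (algebraMap K (AlgebraicClosure K)) F) = 0 →
    (∀ i, eval v (pderiv i (MvPolynomial.map (algebraMap K (AlgebraicClosure K)) F)) = 0) →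
    v = 0

namespace AdaptedCoordinates

/-- The same coordinates with the roles of the two lines exchanged. -/
def symm (c : AdaptedCoordinates F W W') : AdaptedCoordinates F W' W where
  param := c.param'
  param' := c.param
  coord := c.coord'
  coord' := c.coord
  gauss := c.gauss'
  gauss' := c.gauss
  range_param := c.range_param'
  range_param' := c.range_param
  coord_mul_param := c.coord'_mul_param'
  coord_mul_param' := c.coord'_mul_param
  coord'_mul_param := c.coord_mul_param'
  coord'_mul_param' := c.coord_mul_param
  eq_skewForm := c.eq_skewForm.trans (skewForm_comm _ _ _ _)

lemma map_mulVec_mem_span {L : Type*} [Field L] (φ : K →+* L) (c : AdaptedCoordinates F W W')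
    (x : Fin 2 → L) :
    (c.param.map φ).mulVec x ∈ Submodule.span L (clVec φ '' (W : Set (Fin n → K))) := by
  have hcol (j : Fin 2) : clVec φ (c.param.col j) ∈ clVec φ '' (W : Set (Fin n → K)) := by
    have hrange : c.param.col j ∈ LinearMap.range c.param.mulVecLin :=
      ⟨Pi.single j 1, (Matrix.mulVecLin_apply _ _).trans (Matrix.mulVec_single_one _ _)⟩
    exact ⟨_, c.range_param.le hrange, rfl⟩
  have hsum : (c.param.map φ).mulVec x = ∑ j, x j • clVec φ (c.param.col j) := by
    ext i
    simp [Matrix.mulVec, dotProduct, clVec, mul_comm]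
  rw [hsum]
  exact Submodule.sum_mem _ fun j _ =>
    Submodule.smul_mem _ _ (Submodule.subset_span (hcol j))

lemma map_eq_skewForm {L : Type*} [Field L] (φ : K →+* L) (c : AdaptedCoordinates F W W') :
    map φ F = skewForm ((c.gauss.map φ).map C) ((c.gauss'.map φ).map C)
      (c.coord.map φ).toMvPolynomial (c.coord'.map φ).toMvPolynomial := by
  conv_lhs => rw [c.eq_skewForm, map_skewForm]
  congr 1 <;> ext i : 1 <;> simp [Matrix.toMvPolynomial_map]

lemma isBasePointFree_gauss (c : AdaptedCoordinates F W W') (h : IsSmoothAlong F W) :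
    IsBasePointFree (c.gauss.map (algebraMap K (AlgebraicClosure K))) := by
  intro x hx
  set φ := algebraMap K (AlgebraicClosure K)
  set v := (c.param.map φ).mulVec x with hv
  have hcoord : eval v ∘ (c.coord.map φ).toMvPolynomial = x := by
    ext i
    rw [Function.comp_apply, Matrix.toMvPolynomial_eval_eq_apply, hv, Matrix.mulVec_mulVec,
      ← Matrix.map_mul, c.coord_mul_param]
    simp
  have hcoord' : eval v ∘ (c.coord'.map φ).toMvPolynomial = 0 := by
    ext i
    rw [Function.comp_apply, Matrix.toMvPolynomial_eval_eq_apply, hv, Matrix.mulVec_mulVec,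
      ← Matrix.map_mul, c.coord'_mul_param]
    simp
  have hquad : quadMap (c.gauss.map φ) (eval v ∘ (c.coord.map φ).toMvPolynomial) = 0 := by
    rw [hcoord, hx]
  have hv0 : v = 0 := by
    refine h v (c.map_mulVec_mem_span φ x) ?_ fun i => ?_
    · rw [c.map_eq_skewForm]
      exact eval_skewForm_eq_zero hquad hcoord'
    · rw [c.map_eq_skewForm]
      exact eval_pderiv_skewForm_eq_zero hquad hcoord' i
  rw [← hcoord, hv0]
  ext i
  rw [Function.comp_apply, Matrix.toMvPolynomial_eval_eq_apply, Matrix.mulVec_zero]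

end AdaptedCoordinates
end Smoothness

section Span

variable {K : Type*} [Field K] {n : ℕ} {F : MvPolynomial (Fin n) K}
  {B : Set (Projectivization K (Fin n → K))} {u v : Fin n → K}

/-- The nonzero vector `v` represents a point of `Span F B`. -/
def MemSpan (F : MvPolynomial (Fin n) K) (B : Set (Projectivization K (Fin n → K)))
    (v : Fin n → K) : Prop :=
  ∃ hv : v ≠ 0, Projectivization.mk K v hv ∈ Span F B

lemma MemSpan.smul (h : MemSpan F B v) {c : K} (hc : c ≠ 0) : MemSpan F B (c • v) := by
  obtain ⟨hv, hmem⟩ := h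
  refine ⟨smul_ne_zero hc hv, ?_⟩
  rwa [(Projectivization.mk_eq_mk_iff' K (c • v) v (smul_ne_zero hc hv) hv).mpr ⟨c, rfl⟩]

lemma eval_lineRestrict (F : MvPolynomial (Fin n) K) (u v : Fin n → K) (x : Fin 2 → K) :
    eval x (lineRestrict F u v) = eval (x 0 • u + x 1 • v) F := by
  rw [lineRestrict, ← coe_aeval_eq_eval, RingHom.coe_coe, comp_aeval_apply,
    ← coe_aeval_eq_eval (x 0 • u + x 1 • v), RingHom.coe_coe]
  congr 2
  ext i
  simp [mul_comm]

lemma MemSpan.secant (hF : F.IsHomogeneous 3) (huv : LinearIndependent K ![u, v]) {c : K}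
    (hc : c ≠ 0) {l m : Fin 3 → K}
    (hr : lineRestrict F u v = C c * ∏ k, (C (m k) * X 0 - C (l k) * X 1))
    (h0 : MemSpan F B (l 0 • u + m 0 • v)) (h1 : MemSpan F B (l 1 • u + m 1 • v))
    (h2 : l 2 • u + m 2 • v ≠ 0) : MemSpan F B (l 2 • u + m 2 • v) := by
  have hne (k : Fin 3) : l k • u + m k • v ≠ 0 := by
    fin_cases k
    exacts [h0.1, h1.1, h2]
  let W := Submodule.span K (Set.range ![u, v])
  have hu : u ∈ W := Submodule.subset_span ⟨0, rfl⟩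
  have hv : v ∈ W := Submodule.subset_span ⟨1, rfl⟩
  have hline : IsLine W := by
    rw [IsLine, finrank_span_eq_card huv, Fintype.card_fin]
  have hfactor (k : Fin 3) : C (m k) * X 0 - C (l k) * X 1 ≠ (0 : MvPolynomial (Fin 2) K) := by
    intro hzero
    have hm : m k = 0 := by simpa using congrArg (eval ![1, 0]) hzero
    have hl : l k = 0 := by simpa using congrArg (eval ![0, 1]) hzero
    exact hne k (by simp [hm, hl])
  have hnot : ¬ LineOnSurf F W := fun hW =>
    mul_ne_zero (C_ne_zero.mpr hc) (Finset.prod_ne_zero_iff.mpr fun k _ => hfactor k)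
      (hr ▸ hW u v hu hv)
  have hzero : eval (l 2 • u + m 2 • v) F = 0 := by
    simpa [hr, Fin.prod_univ_three, mul_comm] using (eval_lineRestrict F u v ![l 2, m 2]).symm
  exact ⟨h2, SpanMem.secant _ _ _ W hline hnot h0.2 h1.2 (mk_mem_zeroSet hF h2 hzero)
    ⟨u, v, hu, hv, huv, c, l, m, hne, hc, hr, rfl, rfl, rfl⟩⟩

lemma MemSpan.of_lineRestrict_eq (hF : F.IsHomogeneous 3) (huv : LinearIndependent K ![u, v])
    {a b : K} (hr : lineRestrict F u v = X 0 * X 1 * (C a * X 0 + C b * X 1))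
    (hu : MemSpan F B u) (hthird : MemSpan F B (b • u - a • v)) : MemSpan F B v := by
  let l : Fin 3 → K := ![1, b, 0]
  let m : Fin 3 → K := ![0, -a, 1]
  have hfactor : lineRestrict F u v = C 1 * ∏ k, (C (m k) * X 0 - C (l k) * X 1) := by
    simp only [hr, l, m, Fin.prod_univ_three, Matrix.cons_val_zero, Matrix.cons_val_one,
      Matrix.cons_val, C_0, C_1, C_neg]
    ring
  have h : MemSpan F B (l 2 • u + m 2 • v) := MemSpan.secant hF huv one_ne_zero hfactor
    (by simpa [l, m] using hu) (by simpa [l, m, sub_eq_add_neg] using hthird)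
    (by simpa [l, m] using huv.ne_zero 1)
  simpa [l, m] using h

lemma MemSpan.of_lineRestrict_eq_tangent (hF : F.IsHomogeneous 3)
    (huv : LinearIndependent K ![u, v]) {b : K} (hb : b ≠ 0)
    (hr : lineRestrict F u v = C b * (X 1 ^ 2 * X 0)) (hu : MemSpan F B u) : MemSpan F B v := by
  refine MemSpan.of_lineRestrict_eq hF huv (a := 0) (b := b) ?_ hu (by simpa using hu.smul hb)
  rw [hr, C_0]
  ring

lemma mk_mem_linePts {W : Submodule K (Fin n → K)} (hv : v ≠ 0) (h : v ∈ W) :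
    Projectivization.mk K v hv ∈ linePts W := by
  obtain ⟨c, hc⟩ := Projectivization.exists_smul_eq_mk_rep K v hv
  rw [linePts, Set.mem_ofPred_eq, OnLine, ← hc]
  exact W.smul_mem _ h

end Span

namespace AdaptedCoordinates

variable {K : Type*} [Field K] {n : ℕ} {F : MvPolynomial (Fin n) K}
  {W W' : Submodule K (Fin n → K)}

/-- The vector with coordinates `x` and `y`. -/
def point (c : AdaptedCoordinates F W W') (x y : Fin 2 → K) : Fin n → K :=
  c.param.mulVec x + c.param'.mulVec y

variable (c : AdaptedCoordinates F W W') {x y z : Fin 2 → K}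

lemma coord_mulVec_point (x y : Fin 2 → K) : c.coord.mulVec (c.point x y) = x := by
  simp [point, Matrix.mulVec_add, c.coord_mul_param, c.coord_mul_param']

lemma coord'_mulVec_point (x y : Fin 2 → K) : c.coord'.mulVec (c.point x y) = y := by
  simp [point, Matrix.mulVec_add, c.coord'_mul_param, c.coord'_mul_param']

lemma point_add_point (x x' y y' : Fin 2 → K) :
    c.point x y + c.point x' y' = c.point (x + x') (y + y') := by
  simp only [point, Matrix.mulVec_add]
  abel

lemma smul_point (s : K) (x y : Fin 2 → K) : s • c.point x y = c.point (s • x) (s • y) := by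
  simp only [point, Matrix.mulVec_smul, smul_add]

lemma linearIndependent_point (hx : x ≠ 0) (hz : z ≠ 0) :
    LinearIndependent K ![c.point x y, c.point 0 z] := by
  refine LinearIndependent.pair_iff.mpr fun s t hst => ?_
  rw [smul_point, smul_point, point_add_point] at hst
  have hs : s • x = 0 := by
    simpa [coord_mulVec_point] using congrArg c.coord.mulVec hst
  have hs0 : s = 0 := (smul_eq_zero.mp hs).resolve_right hx
  have ht : t • z = 0 := by
    simpa [coord'_mulVec_point, hs0] using congrArg c.coord'.mulVec hst
  exact ⟨hs0, (smul_eq_zero.mp ht).resolve_right hz⟩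

lemma lineRestrict_point (x y x' y' : Fin 2 → K) :
    lineRestrict F (c.point x y) (c.point x' y') =
      skewForm (c.gauss.map C) (c.gauss'.map C)
        ((X 0 : MvPolynomial (Fin 2) K) • C ∘ x + (X 1 : MvPolynomial (Fin 2) K) • C ∘ x')
        ((X 0 : MvPolynomial (Fin 2) K) • C ∘ y + (X 1 : MvPolynomial (Fin 2) K) • C ∘ y') := by
  let u := c.point x y
  let v := c.point x' y'
  let φ : MvPolynomial (Fin n) K →+* MvPolynomial (Fin 2) K :=
    (aeval fun i => C (u i) * X 0 + C (v i) * X 1 : MvPolynomial (Fin n) K →ₐ[K] _).toRingHom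
  have hlin (N : Matrix (Fin 2) (Fin n) K) : φ ∘ N.toMvPolynomial =
      (X 0 : MvPolynomial (Fin 2) K) • C ∘ N.mulVec u +
        (X 1 : MvPolynomial (Fin 2) K) • C ∘ N.mulVec v := by
    ext1 i
    simp only [φ, AlgHom.toRingHom_eq_coe, RingHom.coe_coe, aeval_eq_bind₁, algHom_C,
      algebraMap_eq, bind₁_X_right, Function.comp_apply, Pi.add_apply, Pi.smul_apply, smul_eq_mul,
      Matrix.toMvPolynomial, Matrix.mulVec, dotProduct, ← C_mul_X_eq_monomial, map_sum, map_mul,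
      Finset.mul_sum, ← Finset.sum_add_distrib]
    refine Finset.sum_congr rfl fun j _ => ?_
    ring
  have hC (a : Matrix (Fin 2) (Fin 3) K) : (a.map C).map φ = a.map C := by
    ext1 i j
    simp [φ]
  calc
    lineRestrict F u v
      = φ (skewForm (c.gauss.map C) (c.gauss'.map C) c.coord.toMvPolynomial
          c.coord'.toMvPolynomial) := congrArg φ c.eq_skewForm
    _ = _ := by
      rw [map_skewForm, hC, hC, hlin, hlin, coord_mulVec_point, coord_mulVec_point,
        coord'_mulVec_point, coord'_mulVec_point]

lemma lineRestrict_chord (x y : Fin 2 → K) :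
    lineRestrict F (c.point x 0) (c.point 0 y) = X 0 * X 1 *
      (C (wedge (quadMap c.gauss x) y) * X 0 + C (wedge (quadMap c.gauss' y) x) * X 1) := by
  have hzero : (C ∘ 0 : Fin 2 → MvPolynomial (Fin 2) K) = 0 := funext fun _ => C_0
  rw [lineRestrict_point, hzero, smul_zero, smul_zero, add_zero, zero_add, skewForm_smul_smul]
  simp only [map_wedge, map_quadMap]
  ring

lemma lineRestrict_tangent (y z : Fin 2 → K) :
    lineRestrict F (c.point 0 z)
        (c.point (wedge (quadMap c.gauss' y) (quadMap c.gauss' z) • quadMap c.gauss' z)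
          (-wedge (quadMap c.gauss (quadMap c.gauss' z)) y • y)) =
      C (wedge (quadMap c.gauss' y) (quadMap c.gauss' z) * wedge y z ^ 2 *
        theta c.gauss c.gauss' z) * (X 1 ^ 2 * X 0) := by
  have hzero : (C ∘ 0 : Fin 2 → MvPolynomial (Fin 2) K) = 0 := funext fun _ => C_0
  have hsmul (s : K) (w : Fin 2 → K) : (C ∘ (s • w) : Fin 2 → MvPolynomial (Fin 2) K) =
      (C s : MvPolynomial (Fin 2) K) • C ∘ w := funext fun _ => C_mul
  rw [lineRestrict_point, hzero, smul_zero, zero_add, add_comm, hsmul, hsmul]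
  simp only [map_mul, map_pow, map_neg, map_wedge, map_quadMap, map_theta]
  exact skewForm_tangent _ _ _ _ _ _

lemma point_zero_right (x : Fin 2 → K) : c.point x 0 = c.param.mulVec x := by
  simp [point]

lemma point_zero_left (y : Fin 2 → K) : c.point 0 y = c.param'.mulVec y := by
  simp [point]

lemma memSpan_point_zero (hx : x ≠ 0) : MemSpan F (linePts W) (c.point x 0) := by
  have hne : c.point x 0 ≠ 0 := fun h => hx <| by
    rw [← c.coord_mulVec_point x 0, h, Matrix.mulVec_zero]
  have hmem : c.point x 0 ∈ W := c.range_param.le ⟨x, (c.point_zero_right x).symm⟩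
  exact ⟨hne, SpanMem.base _ (mk_mem_linePts hne hmem)⟩

lemma memSpan_of_chord (hF : F.IsHomogeneous 3) (h : wedge (quadMap c.gauss x) y = 0)
    (h' : wedge (quadMap c.gauss' y) x ≠ 0) : MemSpan F (linePts W) (c.point 0 y) := by
  have hx : x ≠ 0 := ne_zero_of_wedge_ne_zero_right h'
  have hy : y ≠ 0 := by
    rintro rfl
    simp [quadMap_zero, wedge] at h'
  have hli : LinearIndependent K ![c.point x 0, c.point 0 y] := c.linearIndependent_point hx hy
  refine MemSpan.of_lineRestrict_eq_tangent hF hli h' ?_ (c.memSpan_point_zero hx)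
  rw [lineRestrict_chord, h, C_0]
  ring

/-- The tangent to the surface at `z` that passes through the third point of the chord through
`y` and `β z` meets the surface only in these two points. -/
lemma memSpan_of_tangent (hF : F.IsHomogeneous 3)
    (hz : MemSpan F (linePts W) (c.point 0 z)) (hθ : theta c.gauss c.gauss' z ≠ 0)
    (h : wedge (quadMap c.gauss' y) (quadMap c.gauss' z) ≠ 0) :
    MemSpan F (linePts W) (c.point 0 y) := by
  have hβz : quadMap c.gauss' z ≠ 0 := ne_zero_of_wedge_ne_zero_right h
  have hyz : wedge y z ≠ 0 := left_ne_zero_of_mul (wedge_quadMap_quadMap c.gauss' y z ▸ h)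
  have hy : y ≠ 0 := ne_zero_of_wedge_ne_zero_left hyz
  have hz0 : z ≠ 0 := ne_zero_of_wedge_ne_zero_right hyz
  set A := wedge (quadMap c.gauss (quadMap c.gauss' z)) y
  set B := wedge (quadMap c.gauss' y) (quadMap c.gauss' z)
  have hthird : MemSpan F (linePts W) (c.point (B • quadMap c.gauss' z) (-A • y)) :=
    MemSpan.of_lineRestrict_eq_tangent hF
      (LinearIndependent.pair_symm_iff.mp (c.linearIndependent_point (smul_ne_zero h hβz) hz0))
      (mul_ne_zero (mul_ne_zero h (pow_ne_zero 2 hyz)) hθ) (c.lineRestrict_tangent y z) hz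
  have hbase : MemSpan F (linePts W) (c.point (quadMap c.gauss' z) 0) :=
    c.memSpan_point_zero hβz
  refine MemSpan.of_lineRestrict_eq hF (c.linearIndependent_point hβz hy)
    (c.lineRestrict_chord _ y) hbase ?_
  rwa [smul_point, smul_zero, sub_eq_add_neg, ← neg_smul, smul_point, smul_zero, point_add_point,
    add_zero, zero_add]

end AdaptedCoordinates

end SkewLines

open CubicSurf SkewLines in
theorem skew_line_spanned_by_other_line_general {K : Type*} [Field K] (hK : 13 ≤ Cardinal.mk K)
    {F : MvPolynomial (Fin 4) K} (hF : F.IsHomogeneous 3) {W W' : Submodule K (Fin 4 → K)}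
    (hl : IsLine W) (hl' : IsLine W') (hS : LineOnSurf F W) (hS' : LineOnSurf F W')
    (hskew : W ⊓ W' = ⊥) (hsmooth : IsSmoothAlong F W) (hsmooth' : IsSmoothAlong F W') :
    linePts W' ⊆ Span F (linePts W) := by
  obtain ⟨c⟩ := nonempty_adaptedCoordinates hF hl hl' hS hS' hskew
  intro P hP
  obtain ⟨y, hy⟩ := c.range_param'.ge hP
  rw [Matrix.mulVecLin_apply, ← c.point_zero_left] at hy
  have hy0 : y ≠ 0 := by
    rintro rfl
    exact P.rep_nonzero (by rw [← hy, c.point_zero_left, Matrix.mulVec_zero])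
  obtain ⟨_, hmem⟩ : MemSpan F (linePts W) P.rep := hy ▸
    forall_of_chord_of_tangent (p := fun y => MemSpan F (linePts W) (c.point 0 y)) hK
      (c.isBasePointFree_gauss hsmooth) (c.symm.isBasePointFree_gauss hsmooth')
      (fun _ _ => c.memSpan_of_chord hF) (fun _ _ => c.memSpan_of_tangent hF) hy0
  rwa [P.mk_rep] at hmem

open CubicSurf MvPolynomial in
/-- Let `K` be a field with at least 13 elements and `S` a smooth cubic
surface over `K` containing two skew `K`-lines `ℓ` and `ℓ'`. Then
`ℓ'(K) ⊆ Span(ℓ(K))`. -/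
theorem skew_line_spanned_by_other_line
    {K : Type*} [Field K] (hK : 13 ≤ Cardinal.mk K)
    (F : MvPolynomial (Fin 4) K) (hF : SmoothCubic F)
    (W W' : Submodule K (Fin 4 → K))
    (hl : IsLine W) (hl' : IsLine W')
    (hS : LineOnSurf F W) (hS' : LineOnSurf F W')
    (hskew : W ⊓ W' = ⊥) :
    linePts W' ⊆ Span F (linePts W) :=
  skew_line_spanned_by_other_line_general hK hF.1 hl hl' hS hS' hskew
    (fun v _ => hF.2 v) (fun v _ => hF.2 v)
end
end
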